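/- arXiv:1212.5785 — 4 statements merged into one kernel-verified Lean document; each statement's English description precedes it below -/
import Mathlib

section
/- Let G be a finite non-abelian simple group. Then the only conjugacy class of G whose cardinality is a prime power (including 1) is the class {1}. -/
lemma aux_norm_one {n : ℕ} (hn : 0 < n) {x : ℂ} (hx : x ^ n = 1) : ‖x‖ = 1 :=
  (pow_eq_one_iff_of_nonneg (norm_nonneg x) hn.ne').1 (by rw [← norm_pow, hx, norm_one])

lemma aux_sum_le (s : Multiset ℂ) (hs : ∀ x ∈ s, ‖x‖ = 1) : ‖s.sum‖ ≤ s.card := by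
  induction s using Multiset.induction with
  | empty => simp
  | cons a t ih =>
    have h1 := ih (fun x hx => hs x (Multiset.mem_cons_of_mem hx))
    have h2 := hs a (Multiset.mem_cons_self a t)
    have := norm_add_le a t.sum
    simp only [Multiset.sum_cons, Multiset.card_cons]
    push_cast
    linarith

lemma aux_all_eq (s : Multiset ℂ) (hs : ∀ x ∈ s, ‖x‖ = 1) (h : ‖s.sum‖ = s.card)
    (x y : ℂ) (hx : x ∈ s) (hy : y ∈ s) : x = y := by
  by_cases hxy : x = y
  · exact hxy
  obtain ⟨t, rfl⟩ := Multiset.exists_cons_of_mem hx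
  have hy' : y ∈ t := by
    rcases Multiset.mem_cons.1 hy with h | h
    · exact absurd h.symm hxy
    · exact h
  obtain ⟨u, rfl⟩ := Multiset.exists_cons_of_mem hy'
  have h1 := aux_sum_le u (fun z hz => hs z (by simp [hz]))
  have hx1 := hs x hx
  have hy1 := hs y hy
  simp only [Multiset.sum_cons, Multiset.card_cons] at h
  push_cast at h
  have h2 : ‖x + (y + u.sum)‖ ≤ ‖x + y‖ + ‖u.sum‖ := by
    rw [← add_assoc]; exact norm_add_le _ _
  have h3 := norm_add_le x y
  exact eq_of_norm_eq_of_norm_add_eq (by rw [hx1, hy1]) (by linarith)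

lemma aux_avg (s : Multiset ℂ) (n : ℕ) (hn : 0 < n) (hs : ∀ x ∈ s, x ^ n = 1)
    (h0 : s.card ≠ 0) (α : ℂ) (hα : IsIntegral ℤ α) (h : (s.card : ℂ) * α = s.sum) :
    s.sum = 0 ∨ ∀ x ∈ s, ∀ y ∈ s, x = y := by
  by_cases hs0 : s.sum = 0
  · exact Or.inl hs0
  right
  let S : Set ℂ := {x : ℂ | x ^ n = 1}
  have hSfin : Finite S := by
    have : S = (Polynomial.nthRootsFinset n (1 : ℂ) : Set ℂ) := by
      ext x; simp [S, Polynomial.mem_nthRootsFinset hn]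
    rw [this]; infer_instance
  let K := IntermediateField.adjoin ℚ S
  have hfd : FiniteDimensional ℚ K := by
    apply IntermediateField.finiteDimensional_adjoin
    intro x hx
    refine IsIntegral.of_pow hn ?_
    rw [show x ^ n = 1 from hx]; exact isIntegral_one
  have hnf : NumberField K := { to_charZero := inferInstance, to_finiteDimensional := hfd }
  obtain ⟨t, ht⟩ : ∃ t : Multiset K, t.map (algebraMap K ℂ) = s := by
    refine ⟨s.attach.map (fun x => ⟨x.1, IntermediateField.subset_adjoin ℚ S (hs x.1 x.2)⟩), ?_⟩
    rw [Multiset.map_map]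
    exact Multiset.attach_map_val s
  have hcard : t.card = s.card := by rw [← ht, Multiset.card_map]
  have hc : (s.card : ℂ) ≠ 0 := by exact_mod_cast h0
  have hcK : (s.card : K) ≠ 0 := by exact_mod_cast h0
  have htpow : ∀ x ∈ t, x ^ n = 1 := by
    intro x hx
    apply (algebraMap K ℂ).injective
    rw [map_pow, map_one]
    exact hs _ (ht ▸ Multiset.mem_map_of_mem _ hx)
  let β : K := t.sum / s.card
  have hβ : algebraMap K ℂ β = α := by
    simp only [β]
    rw [map_div₀, map_natCast, map_multiset_sum, ht, ← h]
    field_simp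
  have hα0 : α ≠ 0 := by
    rintro rfl; apply hs0; rw [← h, mul_zero]
  obtain ⟨m, hm, hpow⟩ := NumberField.Embeddings.pow_eq_one_of_norm_le_one K ℂ (x := β)
    (by rintro hb; apply hα0; rw [← hβ, hb, map_zero])
    (by rw [← hβ] at hα
        exact (isIntegral_algebraMap_iff (algebraMap K ℂ).injective).1 hα)
    (by
      intro φ
      have h1 := aux_sum_le (t.map φ) (by
        intro x hx
        obtain ⟨y, hy, rfl⟩ := Multiset.mem_map.1 hx
        apply aux_norm_one hn
        rw [← map_pow, htpow y hy, map_one])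
      rw [Multiset.card_map, hcard, ← map_multiset_sum] at h1
      simp only [β]
      rw [map_div₀, map_natCast, norm_div, Complex.norm_natCast]
      exact div_le_one_of_le₀ h1 (by positivity))
  have hα1 : ‖α‖ = 1 := by
    apply aux_norm_one hm
    rw [← hβ, ← map_pow, hpow, map_one]
  intro x hx y hy
  refine aux_all_eq s (fun x hx => aux_norm_one hn (hs x hx)) ?_ x y hx hy
  rw [← h, norm_mul, hα1, Complex.norm_natCast, mul_one]

open Polynomial in
/-- eigenvalues of finite order matrices -/
lemma aux_root {d n : ℕ} (M : Matrix (Fin d) (Fin d) ℂ) (hM : M ^ n = 1)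
    (x : ℂ) (hx : x ∈ M.charpoly.roots) : x ^ n = 1 := by
  have h1 : x ∈ spectrum ℂ M := by
    rw [Matrix.mem_spectrum_iff_isRoot_charpoly]
    exact (Polynomial.mem_roots'.1 hx).2
  have h2 := spectrum.pow_mem_pow M n h1
  rw [hM] at h2
  have : Nontrivial (Matrix (Fin d) (Fin d) ℂ) := by
    by_contra hc
    rw [not_nontrivial_iff_subsingleton] at hc
    simp [spectrum.of_subsingleton] at h2
  simpa [spectrum.one_eq] using h2

lemma aux_trace_int {d n : ℕ} (hn : 0 < n) (M : Matrix (Fin d) (Fin d) ℂ) (hM : M ^ n = 1) :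
    IsIntegral ℤ M.trace := by
  rw [Matrix.trace_eq_sum_roots_charpoly]
  apply IsIntegral.multiset_sum
  intro x hx
  refine IsIntegral.of_pow hn ?_
  rw [aux_root M hM x hx]; exact isIntegral_one

open Polynomial in
lemma aux_scalar {d n : ℕ} (hd : d ≠ 0) (hn : 0 < n) (M : Matrix (Fin d) (Fin d) ℂ)
    (hM : M ^ n = 1) (α : ℂ) (hα : IsIntegral ℤ α) (h : (d : ℂ) * α = M.trace) :
    M.trace = 0 ∨ ∃ c : ℂ, M = algebraMap ℂ _ c := by
  have hsp := IsAlgClosed.splits M.charpoly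
  have hcard : M.charpoly.roots.card = d := by
    rw [← hsp.natDegree_eq_card_roots, Matrix.charpoly_natDegree_eq_dim, Fintype.card_fin]
  rcases aux_avg M.charpoly.roots n hn (aux_root M hM) (by rw [hcard]; exact hd) α hα
    (by rw [hcard, h, Matrix.trace_eq_sum_roots_charpoly]) with h0 | h0
  · left; rw [Matrix.trace_eq_sum_roots_charpoly, h0]
  right
  obtain ⟨c, hc⟩ : ∃ c, c ∈ M.charpoly.roots := 
    Multiset.card_pos_iff_exists_mem.1 (by omega)
  have hr : M.charpoly.roots = Multiset.replicate d c :=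
    Multiset.eq_replicate.2 ⟨hcard, fun b hb => h0 b hb c hc⟩
  have hcp : M.charpoly = (X - C c) ^ d := by
    have := hsp.eq_prod_roots_of_monic M.charpoly_monic
    rw [this, hr]; simp
  have hcn : c ^ n = 1 := aux_root M hM c hc
  have hc0 : c ≠ 0 := by rintro rfl; rw [zero_pow hn.ne'] at hcn; exact zero_ne_one hcn
  obtain ⟨q, hq⟩ : (X - C c) ∣ (X ^ n - 1 : ℂ[X]) := by
    rw [dvd_iff_isRoot]; simp [hcn]
  have hqc : q.eval c ≠ 0 := by
    have := congrArg (fun f => (derivative f).eval c) hq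
    rw [derivative_sub, derivative_X_pow, derivative_mul, derivative_X_sub_C] at this
    simp at this
    rw [← this]
    simp [hn.ne', hc0]
  have hcop : IsCoprime ((X - C c) ^ d) q := by
    apply IsCoprime.pow_left
    rw [(irreducible_X_sub_C c).coprime_iff_not_dvd, dvd_iff_isRoot]
    exact hqc
  obtain ⟨u, v, huv⟩ := hcop
  have e1 : aeval M ((X - C c) ^ d) = 0 := by rw [← hcp]; exact Matrix.aeval_self_charpoly M
  have e2 : aeval M (X - C c) * aeval M q = 0 := by
    rw [← map_mul, ← hq]; simp [hM]
  have e3 : aeval M q * aeval M v = 1 := by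
    have := congrArg (aeval M) huv
    rw [map_add, map_mul, e1, mul_zero, zero_add, mul_comm v q, map_mul, map_one] at this
    exact this
  have e4 : aeval M (X - C c) = 0 := by
    rw [← mul_one (aeval M (X - C c)), ← e3, ← mul_assoc, e2, zero_mul]
  refine ⟨c, ?_⟩
  simpa [sub_eq_zero] using e4

lemma aux_trace_pi {m : ℕ} (d : Fin m → ℕ) (A : Π i, Matrix (Fin (d i)) (Fin (d i)) ℂ) :
    LinearMap.trace ℂ _ (LinearMap.mulLeft ℂ A) = ∑ i, (d i : ℂ) * (A i).trace := by
  rw [LinearMap.trace_eq_matrix_trace ℂ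
    (Pi.basis (fun i => Matrix.stdBasis ℂ (Fin (d i)) (Fin (d i))))]
  rw [Matrix.trace, Fintype.sum_sigma]
  refine Finset.sum_congr rfl fun i _ => ?_
  rw [Fintype.sum_prod_type]
  simp only [Matrix.diag_apply, LinearMap.toMatrix_apply, Pi.basis_repr, Pi.basis_apply, 
    LinearMap.mulLeft_apply, Pi.mul_apply, Pi.single_eq_same, Matrix.stdBasis_eq_single]
  simp [Matrix.trace, Matrix.stdBasis, Matrix.mul_apply, Matrix.single_apply, Finset.sum_const, Finset.mul_sum]

lemma aux_trace_reg (G : Type) [Group G] [Fintype G] [DecidableEq G] (g : G) (hg : g ≠ 1) :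
    LinearMap.trace ℂ _ (LinearMap.mulLeft ℂ (MonoidAlgebra.of ℂ G g)) = 0 := by
  rw [LinearMap.trace_eq_matrix_trace ℂ (MonoidAlgebra.basis G ℂ), Matrix.trace]
  refine Finset.sum_eq_zero fun x _ => ?_
  rw [Matrix.diag_apply, LinearMap.toMatrix_apply, LinearMap.mulLeft_apply]
  simp [MonoidAlgebra.basis, MonoidAlgebra.single_mul_single, hg]

lemma aux_central {G : Type} [Group G] {d : ℕ}
    (φ : MonoidAlgebra ℂ G →ₐ[ℂ] Matrix (Fin d) (Fin d) ℂ) (hφ : Function.Surjective φ)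
    (z : MonoidAlgebra ℂ G)
    (hz : ∀ h : G, MonoidAlgebra.of ℂ G h * z = z * MonoidAlgebra.of ℂ G h) :
    ∃ c : ℂ, φ z = algebraMap ℂ _ c := by
  have hall : ∀ y : MonoidAlgebra ℂ G, y * z = z * y := by
    intro y
    induction y using MonoidAlgebra.induction_on with
    | of h => exact hz h
    | add a b ha hb => rw [add_mul, mul_add, ha, hb]
    | smul r a ha => rw [smul_mul_assoc, mul_smul_comm, ha]
  have h1 : φ z ∈ Set.center (Matrix (Fin d) (Fin d) ℂ) := by
    rw [Semigroup.mem_center_iff]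
    intro M
    obtain ⟨y, rfl⟩ := hφ M
    rw [← map_mul, ← map_mul, hall]
  rw [Matrix.center_eq_range] at h1
  obtain ⟨c, hc⟩ := h1
  exact ⟨c, hc.symm⟩

lemma aux_integral_sum {G : Type} [Group G] [Fintype G] (s : Finset G) :
    IsIntegral ℤ (∑ x ∈ s, MonoidAlgebra.of ℂ G x) := by
  have h : IsIntegral ℤ (∑ x ∈ s, MonoidAlgebra.of ℤ G x) := by
    have : Module.Finite ℤ (MonoidAlgebra ℤ G) := Module.Finite.of_basis (MonoidAlgebra.basis G ℤ)
    exact IsIntegral.of_finite ℤ _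
  have h2 := h.map (MonoidAlgebra.mapRingHom G (Int.castRingHom ℂ)).toIntAlgHom
  simpa [map_sum] using h2

lemma aux_comp {G : Type} [Group G] [Fintype G] [DecidableEq G] {d : ℕ} (hd : d ≠ 0)
    (φ : MonoidAlgebra ℂ G →ₐ[ℂ] Matrix (Fin d) (Fin d) ℂ) (hφ : Function.Surjective φ)
    (g : G) (p k : ℕ) (hp : p.Prime) (hpd : ¬ p ∣ d) (s : Finset G)
    (hs : ∀ x, x ∈ s ↔ IsConj g x) (hcard : s.card = p ^ k) :
    (φ (MonoidAlgebra.of ℂ G g)).trace = 0 ∨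
      ∃ c : ℂ, φ (MonoidAlgebra.of ℂ G g) = algebraMap ℂ _ c := by
  have hn : 0 < Fintype.card G := Fintype.card_pos
  have hM : φ (MonoidAlgebra.of ℂ G g) ^ Fintype.card G = 1 := by
    rw [← map_pow, ← map_pow, pow_card_eq_one, map_one, map_one]
  obtain ⟨c, hc⟩ := aux_central φ hφ (∑ x ∈ s, MonoidAlgebra.of ℂ G x) (by
    intro h
    rw [Finset.mul_sum, Finset.sum_mul]
    refine Finset.sum_bij (fun x _ => h * x * h⁻¹) ?_ ?_ ?_ ?_
    · intro x hx
      rw [hs] at hx ⊢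
      exact hx.trans (isConj_iff.2 ⟨h, rfl⟩)
    · intro a _ b _ hab
      simpa using hab
    · intro y hy
      refine ⟨h⁻¹ * y * h, ?_, by group⟩
      rw [hs] at hy ⊢
      exact hy.trans (isConj_iff.2 ⟨h⁻¹, by group⟩)
    · intro x hx
      rw [← map_mul, ← map_mul]
      congr 1
      group)
  have hcint : IsIntegral ℤ c := by
    have h1 := (aux_integral_sum s).map (φ.restrictScalars ℤ)
    rw [AlgHom.restrictScalars_apply, hc] at h1
    have : Nonempty (Fin d) := ⟨⟨0, Nat.pos_of_ne_zero hd⟩⟩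
    exact (isIntegral_algebraMap_iff (algebraMap ℂ (Matrix (Fin d) (Fin d) ℂ)).injective).1 h1
  have htr : (p : ℂ) ^ k * (φ (MonoidAlgebra.of ℂ G g)).trace = d * c := by
    have h1 := congrArg Matrix.trace hc
    rw [map_sum, Matrix.trace_sum] at h1
    rw [Finset.sum_congr rfl (g := fun _ => (φ (MonoidAlgebra.of ℂ G g)).trace)] at h1
    · rw [Finset.sum_const, hcard, nsmul_eq_mul] at h1
      push_cast at h1
      rw [h1, Matrix.algebraMap_eq_diagonal, Matrix.trace_diagonal]
      simp
    · intro x hx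
      obtain ⟨y, rfl⟩ := isConj_iff.1 ((hs x).1 hx)
      rw [map_mul, map_mul, map_mul, map_mul, Matrix.trace_mul_comm, ← mul_assoc, ← map_mul φ,
        ← map_mul (MonoidAlgebra.of ℂ G), inv_mul_cancel, map_one, map_one, one_mul]
  have hcop : IsCoprime ((p ^ k : ℕ) : ℤ) (d : ℤ) :=
    Nat.isCoprime_iff_coprime.2 (Nat.Coprime.pow_left k ((Nat.Prime.coprime_iff_not_dvd hp).2 hpd))
  obtain ⟨a, b, hab⟩ := hcop
  refine aux_scalar hd hn _ hM (a * c + b * (φ (MonoidAlgebra.of ℂ G g)).trace) ?_ ?_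
  · have hi : ∀ a : ℤ, IsIntegral ℤ (a : ℂ) := fun a => isIntegral_algebraMap (R := ℤ) (x := a)
    exact ((hi a).mul hcint).add ((hi b).mul (aux_trace_int hn _ hM))
  · have hab' : (a : ℂ) * (p : ℂ) ^ k + b * d = 1 := by exact_mod_cast hab
    linear_combination (-a : ℂ) * htr + (φ (MonoidAlgebra.of ℂ G g)).trace * hab'

lemma aux_trivial {G : Type} [Group G] [IsSimpleGroup G] (hnab : ∃ a b : G, a * b ≠ b * a)
    {d : ℕ} (φ : MonoidAlgebra ℂ G →ₐ[ℂ] Matrix (Fin d) (Fin d) ℂ) (g : G) (hg : g ≠ 1)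
    (c : ℂ) (hc : φ (MonoidAlgebra.of ℂ G g) = algebraMap ℂ _ c) :
    ∀ h : G, φ (MonoidAlgebra.of ℂ G h) = 1 := by
  let ρ : G →* Matrix (Fin d) (Fin d) ℂ := (φ : _ →* _).comp (MonoidAlgebra.of ℂ G)
  rcases (MonoidHom.normal_ker ρ).eq_bot_or_eq_top with h | h
  · exfalso
    have hinj : Function.Injective ρ := (MonoidHom.ker_eq_bot_iff ρ).1 h
    have hgc : g ∈ Subgroup.center G := by
      rw [Subgroup.mem_center_iff]
      intro x
      apply hinj
      rw [map_mul, map_mul]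
      have : ρ g = algebraMap ℂ _ c := hc
      rw [this]
      exact (Algebra.commutes c (ρ x)).symm
    rcases (inferInstance : (Subgroup.center G).Normal).eq_bot_or_eq_top with h' | h'
    · rw [h'] at hgc; exact hg (Subgroup.mem_bot.1 hgc)
    · obtain ⟨a, b, hab⟩ := hnab
      have hb : b ∈ Subgroup.center G := by rw [h']; trivial
      exact hab (Subgroup.mem_center_iff.1 hb a)
  · intro x
    have : x ∈ ρ.ker := by rw [h]; trivial
    exact this

/-- A representation trivial on the group factors through the augmentation. -/
lemma aux_aug {G : Type} [Group G] {d : ℕ}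
    (φ : MonoidAlgebra ℂ G →ₐ[ℂ] Matrix (Fin d) (Fin d) ℂ)
    (h1 : ∀ h : G, φ (MonoidAlgebra.of ℂ G h) = 1) (y : MonoidAlgebra ℂ G) :
    φ y = algebraMap ℂ _ (MonoidAlgebra.lift ℂ ℂ G 1 y) := by
  induction y using MonoidAlgebra.induction_on with
  | of h => rw [h1 h]; simp
  | add a b ha hb => rw [map_add, map_add, map_add, ha, hb]
  | smul r a ha => rw [map_smul, map_smul, ha, smul_eq_mul, map_mul, Algebra.smul_def]

lemma aux_dim {G : Type} [Group G] {d : ℕ} (hd : d ≠ 0)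
    (φ : MonoidAlgebra ℂ G →ₐ[ℂ] Matrix (Fin d) (Fin d) ℂ) (hφ : Function.Surjective φ)
    (h1 : ∀ h : G, φ (MonoidAlgebra.of ℂ G h) = 1) : d = 1 := by
  by_contra hne
  have h2 : 2 ≤ d := by omega
  let i : Fin d := ⟨0, by omega⟩
  let j : Fin d := ⟨1, by omega⟩
  have hij : i ≠ j := by simp [i, j]
  obtain ⟨y, hy⟩ := hφ (Matrix.single i j 1)
  rw [aux_aug φ h1] at hy
  have := congrFun (congrFun hy i) j
  rw [Matrix.algebraMap_matrix_apply, if_neg hij, Matrix.single_apply_same] at this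
  exact zero_ne_one this

lemma aux_not_int (p : ℕ) (hp : p.Prime) (γ : ℂ) (hγ : IsIntegral ℤ γ) (h : (p : ℂ) * γ = 1) :
    False := by
  have hp0 : (p : ℂ) ≠ 0 := by exact_mod_cast hp.ne_zero
  have h1 : γ = algebraMap ℚ ℂ (1 / p) := by
    simp; field_simp; linear_combination h
  rw [h1, isIntegral_algebraMap_iff (algebraMap ℚ ℂ).injective] at hγ
  obtain ⟨m, hm⟩ := IsIntegrallyClosed.isIntegral_iff.1 hγ
  have hp0' : (p : ℚ) ≠ 0 := by exact_mod_cast hp.ne_zero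
  have h2 : (m : ℚ) * p = 1 := by
    have : (m : ℚ) = 1 / p := hm
    rw [this]; field_simp
  have h3 : m * (p : ℤ) = 1 := by exact_mod_cast h2
  have h4 : (p : ℤ) ∣ 1 := ⟨m, by rw [mul_comm]; exact h3.symm⟩
  have h5 : p ∣ 1 := by exact_mod_cast h4
  exact hp.one_lt.ne' (Nat.dvd_one.1 h5)

theorem stmt_4 (G : Type) [Group G] [Fintype G] [DecidableEq G]
    [IsSimpleGroup G] (hnab : ∃ a b : G, a * b ≠ b * a)
    (g : G) (p k : ℕ) (hp : p.Prime)
    (hcard : (Finset.univ.filter (fun x => IsConj g x)).card = p ^ k) :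
    g = 1 := by
  by_contra hg
  have hfd : FiniteDimensional ℂ (MonoidAlgebra ℂ G) :=
    Module.Finite.of_basis (MonoidAlgebra.basis G ℂ)
  have hne : NeZero (Nat.card G : ℂ) := ⟨by simp [Nat.card_eq_fintype_card]⟩
  obtain ⟨n, d, hd, ⟨e⟩⟩ :=
    IsSemisimpleRing.exists_algEquiv_pi_matrix_of_isAlgClosed ℂ (MonoidAlgebra ℂ G)
  let φ : ∀ i, MonoidAlgebra ℂ G →ₐ[ℂ] Matrix (Fin (d i)) (Fin (d i)) ℂ := fun i =>
    (Pi.evalAlgHom ℂ (fun i => Matrix (Fin (d i)) (Fin (d i)) ℂ) i).comp e.toAlgHom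
  have hφe : ∀ i y, φ i y = e y i := fun i y => rfl
  have hφ : ∀ i, Function.Surjective (φ i) := by
    intro i M
    refine ⟨e.symm (Pi.single i M), ?_⟩
    rw [hφe, AlgEquiv.apply_symm_apply, Pi.single_eq_same]
  have hsum : ∑ i, (d i : ℂ) * (φ i (MonoidAlgebra.of ℂ G g)).trace = 0 := by
    rw [← aux_trace_reg G g hg]
    have h1 := aux_trace_pi d (e (MonoidAlgebra.of ℂ G g))
    rw [← LinearMap.trace_conj' _ e.toLinearEquiv]
    rw [show (∑ i, (d i : ℂ) * (φ i (MonoidAlgebra.of ℂ G g)).trace) =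
      ∑ i, (d i : ℂ) * (e (MonoidAlgebra.of ℂ G g) i).trace from rfl, ← h1]
    congr 1
    apply LinearMap.ext
    intro x
    simp [LinearEquiv.conj_apply]
  -- existence of the trivial component
  obtain ⟨i₀, hi₀⟩ : ∃ i, ∀ h : G, φ i (MonoidAlgebra.of ℂ G h) = 1 := by
    let z : MonoidAlgebra ℂ G := ∑ x : G, MonoidAlgebra.of ℂ G x
    have hz1 : ∀ h : G, MonoidAlgebra.of ℂ G h * z = z := by
      intro h
      simp only [z, Finset.mul_sum, ← map_mul]
      exact Fintype.sum_equiv (Equiv.mulLeft h) _ _ (fun x => rfl)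
    have hz2 : ∀ h : G, z * MonoidAlgebra.of ℂ G h = z := by
      intro h
      simp only [z, Finset.sum_mul, ← map_mul]
      exact Fintype.sum_equiv (Equiv.mulRight h) _ _ (fun x => rfl)
    have hz0 : z ≠ 0 := by
      intro h0
      have := congrArg (MonoidAlgebra.lift ℂ ℂ G 1) h0
      simp [z, map_sum] at this
    obtain ⟨i, hi⟩ : ∃ i, φ i z ≠ 0 := by
      by_contra! hall
      apply hz0
      apply e.injective
      rw [map_zero]
      funext i
      exact hall i
    obtain ⟨c, hc⟩ := aux_central (φ i) (hφ i) z (fun h => by rw [hz1, hz2])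
    have hc0 : c ≠ 0 := by rintro rfl; rw [map_zero] at hc; exact hi hc
    refine ⟨i, fun h => ?_⟩
    have h2 := congrArg (φ i) (hz1 h)
    rw [map_mul, hc, ← Algebra.commutes, ← Algebra.smul_def, Algebra.algebraMap_eq_smul_one] at h2
    exact smul_right_injective _ hc0 h2
  have huniq : ∀ j, (∀ h : G, φ j (MonoidAlgebra.of ℂ G h) = 1) → j = i₀ := by
    intro j hj
    by_contra hne
    have hy1 : φ j (e.symm (Pi.single j 1)) = 1 := by
      rw [hφe, AlgEquiv.apply_symm_apply, Pi.single_eq_same]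
    have hy0 : φ i₀ (e.symm (Pi.single j 1)) = 0 := by
      rw [hφe, AlgEquiv.apply_symm_apply, Pi.single_eq_of_ne (Ne.symm hne)]
    rw [aux_aug _ hj] at hy1
    rw [aux_aug _ hi₀] at hy0
    have h0 := (map_eq_zero_iff _ (algebraMap ℂ (Matrix (Fin (d i₀)) (Fin (d i₀)) ℂ)).injective).1 hy0
    rw [h0, map_zero] at hy1
    exact zero_ne_one hy1
  have hd0 : d i₀ = 1 := aux_dim (hd i₀).out (φ i₀) (hφ i₀) hi₀
  have hβ : ∀ i, ∃ β : ℂ, IsIntegral ℤ β ∧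
      (i ≠ i₀ → (d i : ℂ) * (φ i (MonoidAlgebra.of ℂ G g)).trace = p * β) := by
    intro i
    by_cases hpd : p ∣ d i
    · obtain ⟨m, hm⟩ := hpd
      refine ⟨m * (φ i (MonoidAlgebra.of ℂ G g)).trace, ?_, fun _ => ?_⟩
      swap
      · have hm' : (d i : ℂ) = p * m := by exact_mod_cast hm
        rw [hm', mul_assoc]
      refine IsIntegral.mul (isIntegral_algebraMap (R := ℤ) (x := (m : ℤ))) ?_
      refine aux_trace_int (Fintype.card_pos (α := G)) _ ?_
      rw [← map_pow, ← map_pow, pow_card_eq_one, map_one, map_one]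
    · refine ⟨0, isIntegral_zero, fun hi => ?_⟩
      rcases aux_comp (hd i).out (φ i) (hφ i) g p k hp hpd _ (by simp) hcard with h | ⟨c, hc⟩
      · rw [h]; simp
      · exact absurd (huniq i (aux_trivial hnab (φ i) g hg c hc)) hi
  choose β hβi hβe using hβ
  rw [← Finset.add_sum_erase _ _ (Finset.mem_univ i₀), hi₀, Matrix.trace_one, Fintype.card_fin,
    hd0, Finset.sum_congr rfl (fun i hi => hβe i (Finset.ne_of_mem_erase hi)),
    ← Finset.mul_sum] at hsum
  refine aux_not_int p hp (-∑ i ∈ Finset.univ.erase i₀, β i)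
    (IsIntegral.neg (IsIntegral.sum _ fun i _ => hβi i)) ?_
  push_cast at hsum
  linear_combination -hsum
end

section
/- Let G be a finite group of order p^a q^b with a + b > 0, where p and q are primes. Then G has a normal subgroup N with {1} ⊊ N, i.e., G is not simple unless it has prime order. -/
lemma kron_sum (n : ℕ) (hn : 0 < n) (s : Multiset ℂ) (hs : ∀ x ∈ s, x ^ n = 1)
    (hd : 0 < s.card) (hInt : IsIntegral ℤ (s.sum / (s.card : ℂ))) (h0 : s.sum ≠ 0) :
    ∃ u : ℂ, ∀ x ∈ s, x = u := by
  classical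
  have hdC : (s.card : ℂ) ≠ 0 := by exact_mod_cast hd.ne'
  have hbound : ∀ t : Multiset ℂ, (∀ x ∈ t, x ^ n = 1) → ‖t.sum‖ ≤ t.card := by
    intro t
    induction t using Multiset.induction with
    | empty => simp
    | cons a t ih =>
      intro h
      have h1 : ‖a‖ = 1 := Complex.norm_eq_one_of_pow_eq_one (h a (by simp)) hn.ne'
      have h2 := ih (fun x hx => h x (by simp [hx]))
      have h3 := norm_add_le a t.sum
      simp only [Multiset.sum_cons, Multiset.card_cons]
      push_cast
      linarith
  obtain ⟨m, hm, hu⟩ : ∃ m : ℕ, 0 < m ∧ (s.sum / (s.card : ℂ)) ^ m = 1 := by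
    let K := IntermediateField.adjoin ℚ ({x | x ∈ s} : Set ℂ)
    have hfin : Finite ({x | x ∈ s} : Set ℂ) := by
      have := s.toFinset.finite_toSet
      have h2 : ({x | x ∈ s} : Set ℂ) = s.toFinset := by ext; simp
      rw [h2]; exact this
    have : FiniteDimensional ℚ K := IntermediateField.finiteDimensional_adjoin (by
      intro x hx
      exact IsIntegral.of_pow hn (by rw [hs x hx]; exact isIntegral_one))
    have : NumberField K := { to_charZero := K.charZero, to_finiteDimensional := this }
    have hl : ∀ x ∈ s, x ∈ K := fun x hx => IntermediateField.subset_adjoin _ _ hx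
    obtain ⟨t, ht⟩ : ∃ t : Multiset K, t.map (fun x : K => (x : ℂ)) = s := by
      refine ⟨s.attach.map (fun x => ⟨x.1, hl _ x.2⟩), ?_⟩
      simp [Multiset.map_map]
    have hsum : ((t.sum : K) : ℂ) = s.sum := by
      rw [← ht]; exact map_multiset_sum K.val t
    have hcard : t.card = s.card := by rw [← ht]; simp
    have hy : ((t.sum / (t.card : K) : K) : ℂ) = s.sum / (s.card : ℂ) := by
      push_cast; rw [ht, hcard]
    have htp : ∀ x ∈ t, x ^ n = 1 := by
      intro x hx
      have := hs x (by rw [← ht]; exact Multiset.mem_map_of_mem _ hx)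
      exact_mod_cast this
    obtain ⟨m, hm, h⟩ := NumberField.Embeddings.pow_eq_one_of_norm_le_one
      (x := t.sum / (t.card : K)) K ℂ
      (by
        intro h; rw [h] at hy
        have : s.sum / (s.card : ℂ) = 0 := by rw [← hy]; simp
        exact (div_ne_zero h0 hdC) this)
      (by
        rw [← hy] at hInt
        exact (isIntegral_algebraMap_iff (algebraMap K ℂ).injective).mp hInt)
      (by
        intro φ
        rw [map_div₀, map_natCast, map_multiset_sum, norm_div, hcard, Complex.norm_natCast]
        rw [div_le_one (by exact_mod_cast hd), ← hcard]
        refine (hbound _ ?_).trans (by simp)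
        intro x hx
        obtain ⟨y, hy, rfl⟩ := Multiset.mem_map.mp hx
        rw [← map_pow, htp y hy, map_one])
    refine ⟨m, hm, ?_⟩
    rw [← hy]
    exact_mod_cast congrArg (fun x : K => (x : ℂ)) h
  set u := s.sum / (s.card : ℂ) with hudef
  have hsu : s.sum = s.card * u := by rw [hudef]; field_simp
  have hnu : ‖u‖ = 1 := Complex.norm_eq_one_of_pow_eq_one hu hm.ne'
  refine ⟨u, fun x hx => ?_⟩
  obtain ⟨t, rfl⟩ := Multiset.exists_cons_of_mem hx
  have hnx : ‖x‖ = 1 := Complex.norm_eq_one_of_pow_eq_one (hs x hx) hn.ne'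
  have ht := hbound t (fun y hy => hs y (by simp [hy]))
  simp only [Multiset.sum_cons, Multiset.card_cons] at hsu
  push_cast at hsu
  have h1 : ‖u‖ ^ 2 = 1 := by rw [hnu]; norm_num
  have h2 : ‖x‖ ^ 2 = 1 := by rw [hnx]; norm_num
  have h3 : ‖((t.card : ℂ) + 1) * u - x‖ ≤ t.card := by
    rw [← hsu]; simpa using ht
  have h4 : ‖((t.card : ℂ) + 1) * u - x‖ ^ 2 ≤ (t.card : ℝ) ^ 2 := by gcongr
  rw [Complex.sq_norm, Complex.normSq_apply] at h1 h2 h4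
  simp at h4
  have hc : (0 : ℝ) ≤ t.card := by positivity
  have key : (u.re - x.re) ^ 2 + (u.im - x.im) ^ 2 ≤ 0 := by nlinarith
  apply Complex.ext <;> nlinarith [sq_nonneg (u.re - x.re), sq_nonneg (u.im - x.im)]

open Polynomial in
lemma finite_order_scalar (d n : ℕ) (hn : 0 < n) (hd : 0 < d)
    (A : Matrix (Fin d) (Fin d) ℂ) (hA : A ^ n = 1) :
    IsIntegral ℤ A.trace ∧ (IsIntegral ℤ (A.trace / (d : ℂ)) → A.trace ≠ 0 →
      ∃ u : ℂ, A = Matrix.scalar (Fin d) u) := by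
  have : Nonempty (Fin d) := ⟨⟨0, hd⟩⟩
  have hroot : ∀ x ∈ A.charpoly.roots, x ^ n = 1 := by
    intro x hx
    have h1 := (Matrix.mem_spectrum_iff_isRoot_charpoly (A := A) (r := x)).mpr (Polynomial.isRoot_of_mem_roots hx)
    have h2 := spectrum.pow_mem_pow A n h1
    rw [hA, spectrum.one_eq] at h2
    simpa using h2
  have htr := Matrix.trace_eq_sum_roots_charpoly (A := A)
  have hspl : A.charpoly.Splits := IsAlgClosed.splits _
  have hcard : A.charpoly.roots.card = d := by
    rw [← hspl.natDegree_eq_card_roots, Matrix.charpoly_natDegree_eq_dim]; simp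
  refine ⟨?_, ?_⟩
  · rw [htr]
    exact IsIntegral.multiset_sum (fun x hx => IsIntegral.of_pow hn (by rw [hroot x hx]; exact isIntegral_one))
  · intro hi h0
    rw [htr] at hi h0
    obtain ⟨u, hu⟩ := kron_sum n hn _ hroot (by rw [hcard]; exact hd) (by rw [hcard]; exact hi) h0
    refine ⟨u, ?_⟩
    have hrep : A.charpoly.roots = Multiset.replicate d u :=
      Multiset.eq_replicate.mpr ⟨hcard, hu⟩
    have hun : u ^ n = 1 := hroot u (by rw [hrep]; exact Multiset.mem_replicate.mpr ⟨hd.ne', rfl⟩)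
    have hcp : A.charpoly = (X - C u) ^ d := by
      have := hspl.eq_prod_roots_of_monic A.charpoly_monic
      rw [this, hrep]; simp
    have hu0 : u ≠ 0 := by rintro rfl; simp [hn.ne'] at hun
    have hsep : (X ^ n - 1 : ℂ[X]).Separable := by
      apply (Polynomial.separable_X_pow_sub_C (1 : ℂ) (n := n) (by exact_mod_cast hn.ne') one_ne_zero)
    obtain ⟨Q, hQ⟩ : (X - C u) ∣ (X ^ n - 1 : ℂ[X]) := by
      rw [Polynomial.dvd_iff_isRoot]; simp [hun]
    have hcop : IsCoprime (X - C u) Q := by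
      rw [hQ] at hsep
      exact hsep.isCoprime
    obtain ⟨a, b, hab⟩ := hcop.pow_left (m := d)
    have h5 : X - C u = (a * (X - C u)) * (X - C u) ^ d + b * (X ^ n - 1) := by
      rw [hQ]; linear_combination (-(X - C u)) * hab
    have h6 := congrArg (aeval A) h5
    rw [map_add, map_mul, map_mul (aeval A) b, ← hcp, Matrix.aeval_self_charpoly] at h6
    simp [hA] at h6
    rw [sub_eq_zero] at h6
    exact h6

lemma trace_mulLeft_pi {n : ℕ} (d : Fin n → ℕ) (x : Π i, Matrix (Fin (d i)) (Fin (d i)) ℂ) :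
    LinearMap.trace ℂ _ (LinearMap.mulLeft ℂ x) = ∑ i, (d i : ℂ) * (x i).trace := by
  classical
  let b := Pi.basis (fun i => Matrix.stdBasis ℂ (Fin (d i)) (Fin (d i)))
  rw [LinearMap.trace_eq_matrix_trace ℂ b, Matrix.trace, Fintype.sum_sigma]
  refine Finset.sum_congr rfl fun i _ => ?_
  rw [Fintype.sum_prod_type, Matrix.trace, Finset.mul_sum]
  refine Finset.sum_congr rfl fun r _ => ?_
  have : ∀ y, (Matrix.diag (LinearMap.toMatrix b b (LinearMap.mulLeft ℂ x))) ⟨i, r, y⟩ = x i r r := by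
    intro y
    rw [Matrix.diag_apply, LinearMap.toMatrix_apply]
    simp only [b, Pi.basis_repr, Pi.basis_apply, LinearMap.mulLeft_apply, Pi.mul_apply, Pi.single_eq_same, Matrix.stdBasis_eq_single]
    have hr : ∀ M : Matrix (Fin (d i)) (Fin (d i)) ℂ, (Matrix.stdBasis ℂ (Fin (d i)) (Fin (d i))).repr M (r, y) = M r y := by
      intro M
      simp [Matrix.stdBasis]
    rw [hr]
    simp
  rw [Finset.sum_congr rfl fun y _ => this y]
  simp

section Burnside
variable {G : Type} [Group G] [Fintype G]

lemma central_scalar {d : ℕ} (φ : MonoidAlgebra ℂ G →ₐ[ℂ] Matrix (Fin d) (Fin d) ℂ)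
    (hφ : Function.Surjective φ) (z : MonoidAlgebra ℂ G)
    (hz : ∀ h : G, MonoidAlgebra.of ℂ G h * z = z * MonoidAlgebra.of ℂ G h) :
    ∃ c : ℂ, φ z = Matrix.scalar (Fin d) c := by
  have hall : ∀ x : MonoidAlgebra ℂ G, x * z = z * x := by
    intro x
    induction x using MonoidAlgebra.induction_on with
    | of m => exact hz m
    | add x y hx hy => rw [add_mul, mul_add, hx, hy]
    | smul r x hx => rw [smul_mul_assoc, mul_smul_comm, hx]
  have : φ z ∈ Set.range (Matrix.scalar (Fin d)) := by
    rw [Matrix.mem_range_scalar_iff_commute_single]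
    intro i j _
    obtain ⟨x, hx⟩ := hφ (Matrix.single i j 1)
    rw [← hx]
    change φ x * φ z = φ z * φ x
    rw [← map_mul, ← map_mul, hall]
  obtain ⟨c, hc⟩ := this
  exact ⟨c, hc.symm⟩

open Classical in
noncomputable def conjFin (g : G) : Finset G := Finset.univ.filter (fun x => IsConj g x)

noncomputable def classSum (R : Type) [CommRing R] (g : G) : MonoidAlgebra R G :=
  ∑ x ∈ conjFin g, MonoidAlgebra.of R G x

lemma classSum_comm (R : Type) [CommRing R] (g h : G) :
    MonoidAlgebra.of R G h * classSum R g = classSum R g * MonoidAlgebra.of R G h := by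
  unfold classSum
  rw [Finset.mul_sum, Finset.sum_mul]
  refine Finset.sum_bij (fun x _ => h * x * h⁻¹) ?_ ?_ ?_ ?_
  · intro x hx
    simp only [conjFin, Finset.mem_filter, Finset.mem_univ, true_and] at hx ⊢
    exact hx.trans (isConj_iff.mpr ⟨h, rfl⟩)
  · intro x _ y _ hxy
    simpa using hxy
  · intro y hy
    refine ⟨h⁻¹ * y * h, ?_, by group⟩
    simp only [conjFin, Finset.mem_filter, Finset.mem_univ, true_and] at hy ⊢
    exact hy.trans (isConj_iff.mpr ⟨h⁻¹, by group⟩)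
  · intro x _
    rw [← map_mul, ← map_mul]
    congr 1
    group

lemma trace_zero {d : ℕ} (hd : 0 < d) (φ : MonoidAlgebra ℂ G →ₐ[ℂ] Matrix (Fin d) (Fin d) ℂ)
    (hφ : Function.Surjective φ) (hnt : ∃ h : G, φ (MonoidAlgebra.of ℂ G h) ≠ 1)
    (hs : ∀ N : Subgroup G, N.Normal → N = ⊥ ∨ N = ⊤)
    (g : G) (hg : g ∉ Subgroup.center G)
    (hcop : Nat.Coprime (conjFin g).card d) :
    (φ (MonoidAlgebra.of ℂ G g)).trace = 0 := by
  by_contra h0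
  let ρ : G →* Matrix (Fin d) (Fin d) ℂ := (φ : MonoidAlgebra ℂ G →* _).comp (MonoidAlgebra.of ℂ G)
  have hρ : ∀ h, φ (MonoidAlgebra.of ℂ G h) = ρ h := fun _ => rfl
  simp only [hρ] at h0 hnt
  have hdC : (d : ℂ) ≠ 0 := by exact_mod_cast hd.ne'
  have hcard : 0 < Fintype.card G := Fintype.card_pos
  obtain ⟨hI, hscal⟩ := finite_order_scalar d (Fintype.card G) hcard hd (ρ g)
    (by rw [← map_pow, pow_card_eq_one, map_one])
  obtain ⟨c, hc⟩ := central_scalar φ hφ (classSum ℂ g) (classSum_comm ℂ g)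
  -- integrality of c
  have hcI : IsIntegral ℤ c := by
    have h1 : IsIntegral ℤ (classSum ℤ g) := IsIntegral.of_finite ℤ _
    have h2 := h1.map ((MonoidAlgebra.mapRingHom G (Int.castRingHom ℂ)).toIntAlgHom)
    have h3 : (MonoidAlgebra.mapRingHom G (Int.castRingHom ℂ)).toIntAlgHom (classSum ℤ g)
        = classSum ℂ g := by
      simp [classSum]
    rw [h3] at h2
    have h4 := h2.map ((φ : MonoidAlgebra ℂ G →+* Matrix (Fin d) (Fin d) ℂ).toIntAlgHom)
    have h5 : (φ : MonoidAlgebra ℂ G →+* Matrix (Fin d) (Fin d) ℂ).toIntAlgHom (classSum ℂ g) = (Matrix.scalar (Fin d)).toIntAlgHom c := hc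
    rw [h5] at h4
    have : Nonempty (Fin d) := ⟨⟨0, hd⟩⟩
    refine (isIntegral_algHom_iff _ ?_).mp h4
    intro x y hxy
    exact Matrix.scalar_inj.mp hxy
  have htr : (d : ℂ) * c = (conjFin g).card * (ρ g).trace := by
    have h1 := congrArg Matrix.trace hc
    have h2 : ∀ x ∈ conjFin g, (ρ x).trace = (ρ g).trace := by
      intro x hx
      simp only [conjFin, Finset.mem_filter, Finset.mem_univ, true_and] at hx
      obtain ⟨y, rfl⟩ := isConj_iff.mp hx
      rw [map_mul, Matrix.trace_mul_comm, ← map_mul]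
      congr 2; group
    rw [classSum, map_sum, Matrix.trace_sum] at h1
    simp only [hρ] at h1
    rw [Finset.sum_congr rfl h2] at h1
    simp at h1
    exact h1.symm
  have hquot : IsIntegral ℤ ((ρ g).trace / (d : ℂ)) := by
    have hb := Nat.gcd_eq_gcd_ab (conjFin g).card d
    rw [hcop] at hb
    set u := Nat.gcdA (conjFin g).card d
    set v := Nat.gcdB (conjFin g).card d
    have hb' : (1 : ℂ) = (conjFin g).card * (u : ℂ) + d * (v : ℂ) := by exact_mod_cast hb
    have : (ρ g).trace / (d : ℂ) = (u : ℂ) * c + (v : ℂ) * (ρ g).trace := by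
      field_simp
      linear_combination (ρ g).trace * hb' - (u : ℂ) * htr
    rw [this]
    exact ((isIntegral_algebraMap (R := ℤ) (x := u)).mul hcI).add
      ((isIntegral_algebraMap (R := ℤ) (x := v)).mul hI)
  obtain ⟨u, hu⟩ := hscal hquot h0
  have hcomm : ∀ h, ρ (h * g) = ρ (g * h) := by
    intro h
    rw [map_mul, map_mul, hu]
    exact (Matrix.scalar_commute u (fun r' => mul_comm _ _) (ρ h)).symm.eq
  rcases hs ρ.ker (MonoidHom.normal_ker ρ) with hk | hk
  · apply hg
    rw [Subgroup.mem_center_iff]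
    intro h
    exact (MonoidHom.ker_eq_bot_iff ρ).mp hk (hcomm h)
  · obtain ⟨h, hh⟩ := hnt
    have : h ∈ ρ.ker := by rw [hk]; trivial
    exact hh this

lemma trace_mulLeft_algebra (x : MonoidAlgebra ℂ G) :
    LinearMap.trace ℂ _ (LinearMap.mulLeft ℂ x) = Fintype.card G * x.coeff 1 := by
  classical
  rw [LinearMap.trace_eq_matrix_trace ℂ (MonoidAlgebra.basis G ℂ), Matrix.trace]
  have : ∀ h : G, (Matrix.diag (LinearMap.toMatrix (MonoidAlgebra.basis G ℂ)
      (MonoidAlgebra.basis G ℂ) (LinearMap.mulLeft ℂ x))) h = x.coeff 1 := by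
    intro h
    rw [Matrix.diag_apply, LinearMap.toMatrix_apply]
    simp [MonoidAlgebra.basis]
  rw [Finset.sum_congr rfl fun y _ => this y]
  simp

lemma burnside_class
    (hs : ∀ N : Subgroup G, N.Normal → N = ⊥ ∨ N = ⊤)
    (p k : ℕ) (hp : p.Prime) (g : G) (hg : g ∉ Subgroup.center G)
    (hC : (conjFin g).card = p ^ k) : False := by
  classical
  obtain ⟨n, d, hd, ⟨e⟩⟩ := IsSemisimpleRing.exists_algEquiv_pi_matrix_of_isAlgClosed ℂ
    (MonoidAlgebra ℂ G)
  let φ : ∀ i, MonoidAlgebra ℂ G →ₐ[ℂ] Matrix (Fin (d i)) (Fin (d i)) ℂ := fun i =>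
    (Pi.evalAlgHom ℂ (fun i => Matrix (Fin (d i)) (Fin (d i)) ℂ) i).comp e.toAlgHom
  have hφe : ∀ i x, φ i x = e x i := fun _ _ => rfl
  have hφ : ∀ i, Function.Surjective (φ i) := fun i =>
    (Function.surjective_eval i).comp e.surjective
  have hcardC : (Fintype.card G : ℂ) ≠ 0 := by exact_mod_cast Fintype.card_ne_zero
  have htrace : ∀ x : MonoidAlgebra ℂ G,
      ∑ i, (d i : ℂ) * (φ i x).trace = Fintype.card G * x.coeff 1 := by
    intro x
    rw [← trace_mulLeft_algebra, ← LinearMap.trace_conj' _ e.toLinearEquiv]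
    have : e.toLinearEquiv.conj (LinearMap.mulLeft ℂ x) = LinearMap.mulLeft ℂ (e x) := by
      refine LinearMap.ext fun y => ?_
      simp [LinearEquiv.conj_apply]
    rw [this, trace_mulLeft_pi]
    rfl
  let T : Finset (Fin n) := Finset.univ.filter
    (fun i => ∀ h : G, φ i (MonoidAlgebra.of ℂ G h) = 1)
  have hT : ∑ i ∈ T, (d i : ℂ) * (d i : ℂ) = 1 := by
    have h1 := htrace (∑ h : G, MonoidAlgebra.of ℂ G h)
    have h2 : (∑ h : G, MonoidAlgebra.of ℂ G h).coeff 1 = 1 := by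
      simp [MonoidAlgebra.coeff_sum, Finsupp.single_apply]
    rw [h2, mul_one] at h1
    have h3 : ∀ i, (d i : ℂ) * (φ i (∑ h : G, MonoidAlgebra.of ℂ G h)).trace
        = if i ∈ T then (d i : ℂ) * (d i : ℂ) * Fintype.card G else 0 := by
      intro i
      split_ifs with hi
      · simp only [T, Finset.mem_filter, Finset.mem_univ, true_and] at hi
        rw [map_sum, Finset.sum_congr rfl fun h _ => hi h, Finset.sum_const, Matrix.trace_smul, Matrix.trace_one]
        simp
        ring
      · simp only [T, Finset.mem_filter, Finset.mem_univ, true_and, not_forall] at hi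
        obtain ⟨h, hh⟩ := hi
        have hl : ∀ h, MonoidAlgebra.of ℂ G h * (∑ x : G, MonoidAlgebra.of ℂ G x)
            = ∑ x : G, MonoidAlgebra.of ℂ G x := by
          intro h
          rw [Finset.mul_sum]
          exact Fintype.sum_equiv (Equiv.mulLeft h) _ _ (fun x => by rw [← map_mul]; rfl)
        have hr : ∀ h, (∑ x : G, MonoidAlgebra.of ℂ G x) * MonoidAlgebra.of ℂ G h
            = ∑ x : G, MonoidAlgebra.of ℂ G x := by
          intro h
          rw [Finset.sum_mul]
          exact Fintype.sum_equiv (Equiv.mulRight h) _ _ (fun x => by rw [← map_mul]; rfl)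
        obtain ⟨c, hc⟩ := central_scalar (φ i) (hφ i) _ (fun h => (hl h).trans (hr h).symm)
        have h4 := congrArg (φ i) (hl h)
        rw [map_mul, hc] at h4
        have hc0 : c = 0 := by
          by_contra hc0
          apply hh
          have h5 : Matrix.scalar (Fin (d i)) c * Matrix.scalar (Fin (d i)) c⁻¹ = 1 := by
            rw [← map_mul, mul_inv_cancel₀ hc0, map_one]
          have h6 := congrArg (· * Matrix.scalar (Fin (d i)) c⁻¹) h4
          simp only [mul_assoc, h5, mul_one] at h6
          exact h6
        rw [hc, hc0]; simp
    rw [Finset.sum_congr rfl fun i _ => h3 i, Finset.sum_ite_mem, Finset.univ_inter,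
      ← Finset.sum_mul] at h1
    exact mul_right_cancel₀ hcardC (by rw [h1, one_mul])
  have hg1 : g ≠ 1 := by rintro rfl; exact hg (Subgroup.one_mem _)
  have hsum := htrace (MonoidAlgebra.of ℂ G g)
  have h0 : (MonoidAlgebra.of ℂ G g).coeff 1 = 0 := by
    simp [hg1]
  rw [h0, mul_zero, ← Finset.sum_add_sum_compl T] at hsum
  have hT2 : ∑ i ∈ T, (d i : ℂ) * (φ i (MonoidAlgebra.of ℂ G g)).trace = 1 := by
    rw [← hT]
    refine Finset.sum_congr rfl fun i hi => ?_
    simp only [T, Finset.mem_filter, Finset.mem_univ, true_and] at hi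
    rw [hi g]; simp
  rw [hT2] at hsum
  have hpC : (p : ℂ) ≠ 0 := by exact_mod_cast hp.ne_zero
  have hInt : IsIntegral ℤ (∑ i ∈ Tᶜ, (d i : ℂ) * (φ i (MonoidAlgebra.of ℂ G g)).trace / p) := by
    refine IsIntegral.sum _ fun i hi => ?_
    simp only [T, Finset.mem_compl, Finset.mem_filter, Finset.mem_univ, true_and, not_forall] at hi
    have hdi : 0 < d i := Nat.pos_of_ne_zero (hd i).out
    by_cases hpd : p ∣ d i
    · obtain ⟨m, hm⟩ := hpd
      have : (d i : ℂ) * (φ i (MonoidAlgebra.of ℂ G g)).trace / p =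
          (m : ℂ) * (φ i (MonoidAlgebra.of ℂ G g)).trace := by
        have hm2 : (d i : ℂ) = p * m := by exact_mod_cast hm
        field_simp
        rw [hm2]; ring
      rw [this]
      have hm' : IsIntegral ℤ (m : ℂ) := by
        simpa using (isIntegral_algebraMap (R := ℤ) (A := ℂ) (x := (m : ℤ)))
      refine hm'.mul (finite_order_scalar (d i) (Fintype.card G) Fintype.card_pos hdi _ ?_).1
      rw [← map_pow, ← map_pow, pow_card_eq_one, map_one, map_one]
    · rw [trace_zero hdi (φ i) (hφ i) hi hs g hg (by
        rw [hC]; exact Nat.Coprime.pow_left _ ((Nat.Prime.coprime_iff_not_dvd hp).mpr hpd))]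
      simpa using isIntegral_zero
  have hval : ∑ i ∈ Tᶜ, (d i : ℂ) * (φ i (MonoidAlgebra.of ℂ G g)).trace / p
      = algebraMap ℚ ℂ (-1 / p) := by
    rw [← Finset.sum_div, eq_neg_of_add_eq_zero_right hsum]
    simp
  rw [hval, isIntegral_algebraMap_iff (algebraMap ℚ ℂ).injective,
    IsIntegrallyClosed.isIntegral_iff] at hInt
  obtain ⟨y, hy⟩ := hInt
  have hpQ : (p : ℚ) ≠ 0 := by exact_mod_cast hp.ne_zero
  rw [eq_div_iff hpQ] at hy
  have hy' : y * (p : ℤ) = -1 := by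
    have : ((y * (p : ℤ) : ℤ) : ℚ) = ((-1 : ℤ) : ℚ) := by push_cast; simpa using hy
    exact_mod_cast this
  have hdvd : (p : ℤ) ∣ 1 := ⟨-y, by linarith⟩
  have := Int.natCast_dvd_natCast.mp (by exact_mod_cast hdvd : ((p : ℕ) : ℤ) ∣ ((1 : ℕ) : ℤ))
  exact hp.one_lt.ne' (Nat.dvd_one.mp this)

lemma main_aux (p q a b : ℕ) (hp : p.Prime) (hq : q.Prime) (hb : 0 < b)
    (hcard : Fintype.card G = p ^ a * q ^ b)
    (hs : ∀ N : Subgroup G, N.Normal → N = ⊥ ∨ N = ⊤) : (Fintype.card G).Prime := by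
  classical
  have : Fact q.Prime := ⟨hq⟩
  have hqG : q ∣ Nat.card G := by
    rw [Nat.card_eq_fintype_card, hcard]
    exact dvd_mul_of_dvd_right (dvd_pow_self q hb.ne') _
  obtain ⟨Q⟩ : Nonempty (Sylow q G) := inferInstance
  have hQne : (Q : Subgroup G) ≠ ⊥ := Q.ne_bot_of_dvd_card hqG
  have : Nontrivial (Q : Subgroup G) := (Subgroup.nontrivial_iff_ne_bot _).mpr hQne
  have hnt : Nontrivial G := Subtype.val_injective.nontrivial (α := (Q : Subgroup G))
  have := Q.isPGroup'.center_nontrivial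
  obtain ⟨⟨z, hz⟩, hz1⟩ := exists_ne (1 : Subgroup.center (Q : Subgroup G))
  have hz1' : (z : G) ≠ 1 := by
    intro h; apply hz1; ext; simpa using h
  by_cases hc : (z : G) ∈ Subgroup.center G
  · rcases hs (Subgroup.center G) inferInstance with h | h
    · rw [h] at hc; exact absurd (Subgroup.mem_bot.mp hc) hz1'
    · have : IsSimpleGroup G := { eq_bot_or_eq_top_of_normal := hs }
      let _ : CommGroup G := Group.commGroupOfCenterEqTop h
      rw [← Nat.card_eq_fintype_card]
      exact IsSimpleGroup.prime_card
  · exfalso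
    have h1 : (conjFin (z : G)).card = (Subgroup.centralizer {(z : G)}).index := by
      have h := MulAction.index_stabilizer (ConjAct G) (z : G)
      rw [ConjAct.orbit_eq_carrier_conjClasses, ConjAct.stabilizer_eq_centralizer] at h
      have h2 : (conjFin (z : G)).card = (ConjClasses.mk (z : G)).carrier.ncard := by
        rw [← Set.ncard_coe_finset]
        congr 1
        ext x
        rw [ConjClasses.mem_carrier_iff_mk_eq, ConjClasses.mk_eq_mk_iff_isConj, isConj_comm]
        simp only [conjFin, Finset.coe_filter, Finset.mem_univ, true_and, Set.mem_ofPred_eq]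
      rw [h2, ← h]
      rfl
    have h2 : (Q : Subgroup G) ≤ Subgroup.centralizer {(z : G)} := by
      intro x hx
      rw [Subgroup.mem_centralizer_singleton_iff]
      have := Subgroup.mem_center_iff.mp hz ⟨x, hx⟩
      exact congrArg Subtype.val this
    have h3 := Subgroup.index_dvd_of_le h2
    have h4 : (Q : Subgroup G).index ∣ p ^ a := by
      have h5 : (Q : Subgroup G).index ∣ p ^ a * q ^ b := by
        rw [← hcard, ← Nat.card_eq_fintype_card]; exact Subgroup.index_dvd_card _
      refine Nat.Coprime.dvd_of_dvd_mul_right ?_ h5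
      exact Nat.Coprime.pow_right _ ((Nat.Prime.coprime_iff_not_dvd hq).mpr Q.not_dvd_index).symm
    obtain ⟨k, _, hk⟩ := (Nat.dvd_prime_pow hp).mp (h3.trans h4)
    exact burnside_class hs p k hp z hc (h1.trans hk)

end Burnside

theorem stmt_5 (G : Type) [Group G] [Fintype G]
    (p q a b : ℕ) (hp : p.Prime) (hq : q.Prime) (hab : 0 < a + b)
    (hcard : Fintype.card G = p ^ a * q ^ b) :
    (Fintype.card G).Prime ∨
      ∃ N : Subgroup G, N.Normal ∧ N ≠ ⊥ ∧ N ≠ ⊤ := by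
  by_cases h : ∃ N : Subgroup G, N.Normal ∧ N ≠ ⊥ ∧ N ≠ ⊤
  · exact Or.inr h
  · left
    have hs : ∀ N : Subgroup G, N.Normal → N = ⊥ ∨ N = ⊤ := by
      intro N hN
      by_contra hcon
      rw [not_or] at hcon
      exact h ⟨N, hN, hcon.1, hcon.2⟩
    rcases Nat.eq_zero_or_pos b with hb | hb
    · exact main_aux q p b a hq hp (by omega) (by rw [hcard, mul_comm]) hs
    · exact main_aux p q a b hp hq hb hcard hs
end

section
/- Let G be a finite group and g ∈ G, g ≠ 1, such that the conjugacy class of g has size q^l for a prime q and l ≥ 1. Then there exists a nontrivial irreducible character χ of G with q ∤ χ(1) and χ(g) ≠ 0. -/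
open CategoryTheory

/-- The set of irreducible complex characters. -/
def irrChars15 (G : Type) [Group G] : Set (G → ℂ) :=
  {χ | ∃ V : FDRep ℂ G, Simple V ∧ V.character = χ}

lemma mem_irrChars15 (G : Type) [Group G] [Fintype G] {V : Type} [AddCommGroup V] [Module ℂ V]
    [FiniteDimensional ℂ V] (ρ : Representation ℂ G V) [ρ.IsIrreducible] :
    ρ.character ∈ irrChars15 G := by
  have hne : (Nat.card G : ℂ) ≠ 0 := NeZero.ne _
  have := invertibleOfNonzero hne
  refine ⟨FDRep.of ρ, ?_, rfl⟩
  rw [FDRep.simple_iff_char_is_norm_one]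
  have h := Representation.char_orthonormal ρ ρ
  rw [if_pos ⟨Representation.Equiv.refl ρ⟩, inv_mul_eq_one₀ hne] at h
  exact h.symm

lemma char_add15 {G : Type} [Group G] {V : Type} [AddCommGroup V] [Module ℂ V]
    [FiniteDimensional ℂ V] (ρ : Representation ℂ G V) (a b : Subrepresentation ρ)
    (h : IsCompl a.toSubmodule b.toSubmodule) :
    ρ.character = a.toRepresentation.character + b.toRepresentation.character := by
  ext g
  let N : Bool → Submodule ℂ V := fun i => cond i a.toSubmodule b.toSubmodule
  have hN : DirectSum.IsInternal N := by
    rw [DirectSum.isInternal_submodule_iff_isCompl N (i := true) (j := false) (by simp)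
      (by ext x; cases x <;> simp)]
    exact h
  have hf : ∀ i, Set.MapsTo (ρ g) (N i) (N i) := by
    intro i
    cases i
    · exact fun v hv => b.apply_mem_toSubmodule g hv
    · exact fun v hv => a.apply_mem_toSubmodule g hv
  have := LinearMap.trace_eq_sum_trace_restrict hN hf
  rw [Fintype.sum_bool] at this
  exact this

lemma char_mem_closure15 {G : Type} [Group G] [Fintype G] : ∀ (n : ℕ) {V : Type} [AddCommGroup V]
    [Module ℂ V] [FiniteDimensional ℂ V] (ρ : Representation ℂ G V),
    Module.finrank ℂ V = n → ρ.character ∈ AddSubmonoid.closure (irrChars15 G) := by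
  intro n
  induction n using Nat.strong_induction_on with
  | _ n ih =>
    intro V _ _ _ ρ hn
    by_cases hz : n = 0
    · subst hz
      have : Subsingleton V := Module.finrank_zero_iff.mp hn
      have : ρ.character = 0 := by
        ext g
        have : ρ g = 0 := Subsingleton.elim _ _
        simp [Representation.character, this]
      rw [this]
      exact zero_mem _
    by_cases hirr : ρ.IsIrreducible
    · exact AddSubmonoid.subset_closure (mem_irrChars15 G ρ)
    have hnt : Nontrivial V := Module.nontrivial_of_finrank_pos (R := ℂ) (by omega)
    have hnt' : Nontrivial (Subrepresentation ρ) := by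
      refine ⟨⊥, ⊤, fun h => ?_⟩
      have := congrArg Subrepresentation.toSubmodule h
      exact bot_ne_top (α := Submodule ℂ V) this
    obtain ⟨a, ha⟩ : ∃ a : Subrepresentation ρ, ¬ (a = ⊥ ∨ a = ⊤) := by
      by_contra! hcon
      exact hirr ⟨hcon⟩
    push Not at ha
    have hss : Representation.IsSemisimpleRepresentation ρ := inferInstance
    obtain ⟨b, hb⟩ := exists_isCompl a
    have hc : IsCompl a.toSubmodule b.toSubmodule := by
      rw [isCompl_iff, disjoint_iff, codisjoint_iff] at hb ⊢
      exact ⟨congrArg Subrepresentation.toSubmodule hb.1,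
        congrArg Subrepresentation.toSubmodule hb.2⟩
    have hsum := Submodule.finrank_add_eq_of_isCompl hc
    have ha1 : a.toSubmodule ≠ ⊥ := fun h => ha.1 (Subrepresentation.toSubmodule_injective h)
    have ha2 : a.toSubmodule ≠ ⊤ := fun h => ha.2 (Subrepresentation.toSubmodule_injective h)
    have h1 := Submodule.finrank_lt ha2
    have h2 : Module.finrank ℂ a.toSubmodule ≠ 0 := fun h => ha1 (Submodule.finrank_eq_zero.mp h)
    rw [char_add15 ρ a b hc]
    exact add_mem (ih _ (by omega) _ rfl) (ih _ (by omega) _ rfl)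

lemma char_integral15 {G : Type} [Group G] [Fintype G] (V : FDRep ℂ G) (g : G) :
    IsIntegral ℤ (V.character g) := by
  have hpow : (V.ρ g) ^ (Fintype.card G) = 1 := by
    rw [← map_pow, pow_card_eq_one, map_one]
  let b := Module.finBasis ℂ V
  unfold FDRep.character
  rw [LinearMap.trace_eq_matrix_trace ℂ b, Matrix.trace_eq_sum_roots_charpoly]
  refine IsIntegral.multiset_sum ?_
  intro μ hμ
  have hr := Polynomial.isRoot_of_mem_roots hμ
  rw [LinearMap.charpoly_toMatrix, ← Module.End.hasEigenvalue_iff_isRoot_charpoly] at hr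
  obtain ⟨v, hv⟩ := hr.exists_hasEigenvector
  have h := hv.pow_apply (Fintype.card G)
  rw [hpow] at h
  have h1 : μ ^ Fintype.card G = 1 := by
    have : (μ ^ Fintype.card G - 1) • v = 0 := by
      rw [sub_smul, ← h]; simp
    rcases smul_eq_zero.mp this with h | h
    · exact sub_eq_zero.mp h
    · exact absurd h hv.2
  exact IsIntegral.of_pow Fintype.card_pos (h1 ▸ isIntegral_one)

lemma inner15 {G : Type} [Group G] [Fintype G] {χ ψ : G → ℂ} (hχ : χ ∈ irrChars15 G)
    (hψ : ψ ∈ irrChars15 G) :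
    ∑ g, χ g * ψ g⁻¹ = if χ = ψ then (Nat.card G : ℂ) else 0 := by
  classical
  have hne : (Nat.card G : ℂ) ≠ 0 := NeZero.ne _
  have := invertibleOfNonzero hne
  obtain ⟨V, hV, rfl⟩ := hχ
  obtain ⟨W, hW, rfl⟩ := hψ
  have h1 := FDRep.char_orthonormal V W
  have h2 := FDRep.char_orthonormal V V
  rw [if_pos ⟨Iso.refl V⟩] at h2
  split_ifs at h1 ⊢ with h4 h3 h5
  · rwa [inv_mul_eq_one₀ hne, eq_comm] at h1
  · rw [← h4, h2] at h1
    exact absurd h1 one_ne_zero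
  · exact absurd (FDRep.char_iso h5.some) h4
  · simpa [hne] using h1

lemma regular15 {G : Type} [Group G] [Fintype G] [DecidableEq G] (g : G) :
    (Representation.leftRegular ℂ G).character g = if g = 1 then (Nat.card G : ℂ) else 0 := by
  let b : Module.Basis G ℂ (MonoidAlgebra ℂ G) :=
    Module.Basis.ofRepr (MonoidAlgebra.coeffLinearEquiv ℂ)
  have hb : ∀ x, b x = MonoidAlgebra.single x 1 := fun x => rfl
  have hr : ∀ (v : MonoidAlgebra ℂ G) x, b.repr v x = v.coeff x := fun v x => rfl
  unfold Representation.character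
  rw [LinearMap.trace_eq_matrix_trace ℂ b, Matrix.trace]
  simp only [Matrix.diag_apply, LinearMap.toMatrix_apply, hb, hr,
    Representation.ofMulAction_single, MonoidAlgebra.coeff_single, Finsupp.single_apply,
    smul_eq_mul, mul_eq_right]
  split_ifs <;> simp

lemma one_mem15 (G : Type) [Group G] [Fintype G] : (fun _ => 1) ∈ irrChars15 G := by
  have h : (FDRep.of (Representation.trivial ℂ G ℂ)).character = fun _ => 1 := by
    ext g
    simp [FDRep.character]
  refine ⟨FDRep.of (Representation.trivial ℂ G ℂ), ?_, h⟩
  rw [FDRep.simple_iff_char_is_norm_one, h]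
  simp

lemma count15 {G : Type} [Group G] [Fintype G] [DecidableEq G] [DecidableEq (G → ℂ)]
    (M : Multiset (G → ℂ)) (hM : ∀ χ ∈ M, χ ∈ irrChars15 G)
    (hs : M.sum = fun g => if g = 1 then (Nat.card G : ℂ) else 0) (χ : G → ℂ)
    (hχ : χ ∈ irrChars15 G) : (M.count χ : ℂ) = χ 1 := by
  have hne : (Nat.card G : ℂ) ≠ 0 := NeZero.ne _
  have h1 : ∑ g, M.sum g * χ g⁻¹ = Nat.card G * χ 1 := by
    rw [hs]
    simp
  have h2 : ∀ N : Multiset (G → ℂ), (∀ χ ∈ N, χ ∈ irrChars15 G) →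
      ∑ g, N.sum g * χ g⁻¹ = Nat.card G * N.count χ := by
    intro N
    induction N using Multiset.induction_on with
    | empty => simp
    | cons a N ih =>
      intro h
      have h3 := ih (fun x hx => h x (Multiset.mem_cons_of_mem hx))
      have h4 := inner15 (h a (Multiset.mem_cons_self a N)) hχ
      simp only [Multiset.sum_cons, Pi.add_apply, add_mul, Finset.sum_add_distrib, h3, h4,
        Multiset.count_cons, eq_comm (a := χ)]
      split_ifs <;> push_cast <;> ring
  rw [h2 M hM] at h1
  exact mul_left_cancel₀ hne h1

theorem stmt_15 (G : Type) [Group G] [Fintype G] [DecidableEq G]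
    (g : G) (hg : g ≠ 1) (q l : ℕ) (hq : q.Prime) (hl : 1 ≤ l)
    (hcard : (Finset.univ.filter (fun x => IsConj g x)).card = q ^ l) :
    ∃ V : FDRep ℂ G, Simple V ∧ V.character ≠ Function.const G 1 ∧
      ¬ q ∣ Module.finrank ℂ V ∧ V.character g ≠ 0 := by
  classical
  by_contra! hcon
  obtain ⟨M, hM, hs⟩ := AddSubmonoid.exists_multiset_of_mem_closure
    (char_mem_closure15 _ (Representation.leftRegular ℂ G) rfl)
  have hs' : M.sum = fun g => if g = 1 then (Nat.card G : ℂ) else 0 := by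
    rw [hs]; ext g; exact regular15 g
  have hc := count15 M hM hs'
  have hone : (Function.const G (1:ℂ)) ∈ M.toFinset := by
    rw [Multiset.mem_toFinset, ← Multiset.count_ne_zero]
    have := hc _ (one_mem15 G)
    intro h
    change M.count (fun _ => (1:ℂ)) = 0 at h
    rw [h] at this
    simp at this
  have hsum := congrFun hs' g
  rw [if_neg hg, Finset.sum_multiset_count, Finset.sum_apply,
    ← Finset.add_sum_erase _ _ hone] at hsum
  have hrest : ∃ x : ℂ, IsIntegral ℤ x ∧
      ∑ χ ∈ M.toFinset.erase (Function.const G (1:ℂ)), (M.count χ • χ) g = q * x := by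
    have : ∀ χ ∈ M.toFinset.erase (Function.const G (1:ℂ)), ∃ x : ℂ, IsIntegral ℤ x ∧
        (M.count χ • χ) g = q * x := by
      intro χ hχ
      rw [Finset.mem_erase, Multiset.mem_toFinset] at hχ
      have hcχ := hc χ (hM χ hχ.2)
      obtain ⟨V, hV, rfl⟩ := hM χ hχ.2
      by_cases hd : q ∣ Module.finrank ℂ V
      · obtain ⟨d, hd⟩ := hd
        have hdi : IsIntegral ℤ (d : ℂ) := by
          simpa using (isIntegral_algebraMap (R := ℤ) (A := ℂ) (x := (d : ℤ)))
        refine ⟨d * V.character g, hdi.mul (char_integral15 V g), ?_⟩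
        rw [Pi.smul_apply, nsmul_eq_mul, hcχ, FDRep.char_one, hd]
        push_cast; ring
      · refine ⟨0, isIntegral_zero, ?_⟩
        simp [hcon V hV hχ.1 hd]
    choose! f hf using this
    refine ⟨∑ χ ∈ M.toFinset.erase (Function.const G (1:ℂ)), f χ,
      IsIntegral.sum _ fun χ h => (hf χ h).1, ?_⟩
    rw [Finset.mul_sum]
    exact Finset.sum_congr rfl fun χ h => (hf χ h).2
  obtain ⟨x, hx, hxe⟩ := hrest
  have h1 := hc _ (one_mem15 G)
  rw [hxe, Pi.smul_apply, nsmul_eq_mul] at hsum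
  change (M.count (Function.const G 1) : ℂ) = 1 at h1
  rw [h1] at hsum
  simp only [Function.const_apply, mul_one] at hsum
  have hq0 : (q : ℂ) ≠ 0 := by exact_mod_cast hq.ne_zero
  have hxr : x = algebraMap ℚ ℂ (-1 / q) := by
    rw [eq_ratCast]; push_cast
    field_simp
    linear_combination hsum
  rw [hxr, isIntegral_algebraMap_iff (algebraMap ℚ ℂ).injective] at hx
  obtain ⟨z, hz⟩ := IsIntegrallyClosed.isIntegral_iff.mp hx
  have hq0' : (q : ℚ) ≠ 0 := by exact_mod_cast hq.ne_zero
  have : (q : ℤ) * (-z) = 1 := by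
    simp only [eq_intCast] at hz
    have : (q : ℚ) * (-z) = 1 := by rw [hz]; field_simp
    exact_mod_cast this
  have := Int.isUnit_iff.mp (IsUnit.of_mul_eq_one _ this)
  have := hq.two_le
  omega
end

section
/- Let G be a finite group of order p^a q^b with a + b > 0 (p, q primes). Then G has a nontrivial one-dimensional complex representation, equivalently the abelianization of G is nontrivial. -/
open Finset

/-- An algebraic integer which is an average of roots of unity is zero or all the roots agree. -/
lemma avg_roots_aux (K : Type) [Field K] [NumberField K] {n d : ℕ}
    [IsCyclotomicExtension {n} ℚ K] (hn : n ≠ 0) (hd : d ≠ 0) (f : Fin d → ℂ) (hf : ∀ i, f i ^ n = 1)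
    (hint : IsIntegral ℤ ((∑ i, f i) / d)) (h0 : (∑ i, f i) ≠ 0) :
    ∀ i, f i = (∑ i, f i) / d := by
  have : NeZero n := ⟨hn⟩
  have hd' : (d : ℂ) ≠ 0 := by exact_mod_cast hd
  let ι : K →+* ℂ := (IsAlgClosed.lift (R := ℚ) (S := K) (M := ℂ)).toRingHom
  have hζ : IsPrimitiveRoot (IsCyclotomicExtension.zeta n ℚ K) n :=
    IsCyclotomicExtension.zeta_spec n ℚ K
  have hζ' := hζ.map_of_injective ι.injective
  have hex : ∀ i, ∃ x : K, ι x = f i ∧ x ^ n = 1 := by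
    intro i
    obtain ⟨k, -, hk⟩ := hζ'.eq_pow_of_pow_eq_one (hf i)
    refine ⟨IsCyclotomicExtension.zeta n ℚ K ^ k, by rw [map_pow, hk], ?_⟩
    rw [← pow_mul, mul_comm, pow_mul, hζ.pow_eq_one, one_pow]
  choose x hx hxn using hex
  set y : K := (∑ i, x i) / d with hy
  have hιy : ι y = (∑ i, f i) / d := by simp [hy, hx]
  have hy0 : y ≠ 0 := by
    intro h
    rw [h, map_zero] at hιy
    exact (div_ne_zero h0 hd') hιy.symm
  have hyint : IsIntegral ℤ y := by
    rw [← hιy] at hint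
    exact (isIntegral_algHom_iff (ι.toIntAlgHom) ι.injective).1 hint
  obtain ⟨m, hm, hym⟩ := NumberField.Embeddings.pow_eq_one_of_norm_le_one K ℂ hy0 hyint (by
    intro φ
    have h1 : ∀ i, ‖φ (x i)‖ = 1 := fun i =>
      Complex.norm_eq_one_of_pow_eq_one (by rw [← map_pow, hxn, map_one]) hn
    have : ‖∑ i, φ (x i)‖ ≤ d := by
      refine (norm_sum_le _ _).trans ?_
      simp [h1]
    rw [hy, map_div₀, map_sum, map_natCast, norm_div, Complex.norm_natCast]
    exact div_le_one_of_le₀ this (by positivity))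
  set α : ℂ := (∑ i, f i) / d with hα
  have hα1 : ‖α‖ = 1 := by
    refine Complex.norm_eq_one_of_pow_eq_one (n := m) ?_ hm.ne'
    rw [← hιy, ← map_pow, hym, map_one]
  have hαα : α * (starRingEnd ℂ) α = 1 := by
    rw [Complex.mul_conj, Complex.normSq_eq_norm_sq, hα1]; simp
  have hsum : ∑ i, (1 - (f i * (starRingEnd ℂ) α).re) = 0 := by
    rw [sum_sub_distrib, ← Complex.re_sum, ← Finset.sum_mul]
    have : ∑ i, f i = d * α := by rw [hα]; field_simp
    rw [this, mul_assoc, hαα]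
    simp
  have hnorm : ∀ i, ‖f i * (starRingEnd ℂ) α‖ = 1 := fun i => by
    rw [norm_mul, Complex.norm_eq_one_of_pow_eq_one (hf i) hn, RCLike.norm_conj, hα1, one_mul]
  intro i
  have hi := (sum_eq_zero_iff_of_nonneg (fun i _ => by
    have := Complex.re_le_norm (f i * (starRingEnd ℂ) α)
    rw [hnorm i] at this
    linarith)).1 hsum i (mem_univ i)
  have h1 : f i * (starRingEnd ℂ) α = 1 := by
    have hre : (f i * (starRingEnd ℂ) α).re = 1 := by linarith
    have h2 := Complex.normSq_eq_norm_sq (f i * (starRingEnd ℂ) α)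
    rw [hnorm i, Complex.normSq_apply, hre] at h2
    apply Complex.ext
    · simpa using hre
    · have : (f i * (starRingEnd ℂ) α).im * (f i * (starRingEnd ℂ) α).im = 0 := by linarith
      simpa using mul_self_eq_zero.1 this
  calc f i = f i * (α * (starRingEnd ℂ) α) := by rw [hαα, mul_one]
    _ = (f i * (starRingEnd ℂ) α) * α := by ring
    _ = α := by rw [h1, one_mul]

lemma avg_roots {n d : ℕ} (hn : n ≠ 0) (hd : d ≠ 0) (f : Fin d → ℂ) (hf : ∀ i, f i ^ n = 1)
    (hint : IsIntegral ℤ ((∑ i, f i) / d)) (h0 : (∑ i, f i) ≠ 0) :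
    ∀ i, f i = (∑ i, f i) / d := by
  have : NeZero n := ⟨hn⟩
  have : NeZero ((n : ℕ) : ℚ) := ⟨by exact_mod_cast hn⟩
  have : IsCyclotomicExtension {n} ℚ (CyclotomicField n ℚ) := by
    convert CyclotomicField.isCyclotomicExtension n ℚ
    · rfl
    · exact Subsingleton.elim _ _
  have : NumberField (CyclotomicField n ℚ) := IsCyclotomicExtension.numberField {n} ℚ _
  exact avg_roots_aux (CyclotomicField n ℚ) hn hd f hf hint h0

lemma roots_charpoly_pow {d n : ℕ} (M : Matrix (Fin d) (Fin d) ℂ) (hM : M ^ n = 1)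
    {μ : ℂ} (hμ : μ ∈ M.charpoly.roots) : μ ^ n = 1 := by
  have h := Matrix.mem_spectrum_of_isRoot_charpoly (Polynomial.isRoot_of_mem_roots hμ)
  have h2 := spectrum.pow_mem_pow M n h
  rw [hM] at h2
  rcases isEmpty_or_nonempty (Fin d) with h3 | h3
  · have := Subsingleton.elim (1 : Matrix (Fin d) (Fin d) ℂ) 0
    rw [spectrum.of_subsingleton] at h2
    exact h2.elim
  · rw [spectrum.one_eq] at h2
    exact h2

lemma isIntegral_trace_of_pow {d n : ℕ} (hn : n ≠ 0) (M : Matrix (Fin d) (Fin d) ℂ)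
    (hM : M ^ n = 1) : IsIntegral ℤ M.trace := by
  rw [Matrix.trace_eq_sum_roots_charpoly]
  refine IsIntegral.multiset_sum fun μ hμ => ?_
  exact IsIntegral.of_pow (Nat.pos_of_ne_zero hn) (by
    rw [roots_charpoly_pow M hM hμ]; exact isIntegral_one)

lemma scalar_of_integral {d n : ℕ} (hn : n ≠ 0) (hd : d ≠ 0) (M : Matrix (Fin d) (Fin d) ℂ)
    (hM : M ^ n = 1) (hint : IsIntegral ℤ (M.trace / d)) (h0 : M.trace ≠ 0) :
    ∃ c : ℂ, M = algebraMap ℂ _ c := by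
  have hsp := IsAlgClosed.splits M.charpoly
  have hcard : M.charpoly.roots.toList.length = d := by
    rw [Multiset.length_toList, ← hsp.natDegree_eq_card_roots, Matrix.charpoly_natDegree_eq_dim,
      Fintype.card_fin]
  set f : Fin d → ℂ := fun i => M.charpoly.roots.toList[i.cast hcard.symm] with hf
  have hL : List.ofFn f = M.charpoly.roots.toList := by
    apply List.ext_getElem
    · simp [hcard]
    · intro i h1 h2
      simp [hf]
  have hms : M.charpoly.roots = (List.ofFn f : Multiset ℂ) := by rw [hL, Multiset.coe_toList]
  have htr : M.trace = ∑ i, f i := by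
    rw [Matrix.trace_eq_sum_roots_charpoly, hms, Multiset.sum_coe, List.sum_ofFn]
  have hroot : ∀ i, f i ^ n = 1 := fun i => roots_charpoly_pow M hM (by
    rw [hms]; simp)
  rw [htr] at hint h0
  have hall := avg_roots hn hd f hroot hint h0
  set c := (∑ i, f i) / d with hc
  refine ⟨c, ?_⟩
  have hcp : M.charpoly = (Polynomial.X - Polynomial.C c) ^ d := by
    rw [hsp.eq_prod_roots_of_monic (Matrix.charpoly_monic M), hms, Multiset.map_coe,
      Multiset.prod_coe, List.map_ofFn, List.prod_ofFn]
    simp [hall]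
  have h1 : minpoly ℂ M ∣ (Polynomial.X - Polynomial.C c) ^ d := hcp ▸ Matrix.minpoly_dvd_charpoly M
  have h2 : minpoly ℂ M ∣ Polynomial.X ^ n - 1 := minpoly.dvd _ _ (by simp [hM])
  have hsq : Squarefree (minpoly ℂ M) := by
    refine Squarefree.squarefree_of_dvd h2 (Polynomial.Separable.squarefree ?_)
    have := Polynomial.separable_X_pow_sub_C (F := ℂ) (n := n) 1 (by exact_mod_cast hn) one_ne_zero
    simpa using this
  have h3 := (hsq.dvd_pow_iff_dvd hd).1 h1
  have h4 := (minpoly.dvd_iff).1 h3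
  simpa [sub_eq_zero] using h4

/-- Trace of left multiplication on a product of matrix algebras. -/
lemma trace_pi {m : ℕ} (d : Fin m → ℕ) (x : Π i, Matrix (Fin (d i)) (Fin (d i)) ℂ) :
    LinearMap.trace ℂ _ (LinearMap.mulLeft ℂ x) = ∑ i, (d i : ℂ) * (x i).trace := by
  rw [LinearMap.trace_eq_matrix_trace ℂ (Pi.basis fun i => Matrix.stdBasis ℂ (Fin (d i)) (Fin (d i)))]
  rw [Matrix.trace, Fintype.sum_sigma]
  refine sum_congr rfl fun i _ => ?_
  rw [Fintype.sum_prod_type]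
  simp only [Matrix.diag_apply, LinearMap.toMatrix_apply, Pi.basis_repr, Pi.basis_apply,
    LinearMap.mulLeft_apply, Pi.mul_apply, Pi.single_eq_same, Matrix.stdBasis_eq_single]
  have : ∀ a b : Fin (d i), ((Matrix.stdBasis ℂ (Fin (d i)) (Fin (d i))).repr
      (x i * Matrix.single a b 1)) (a, b) = x i a a := by
    intro a b
    have : ∀ M : Matrix (Fin (d i)) (Fin (d i)) ℂ,
      (Matrix.stdBasis ℂ (Fin (d i)) (Fin (d i))).repr M (a, b) = M a b := fun M => by
        simp [Matrix.stdBasis]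
    rw [this]; simp
  simp only [this]
  simp [Matrix.trace, mul_sum]

lemma trace_group {G : Type} [Group G] [Fintype G] [DecidableEq G] (g : G) :
    LinearMap.trace ℂ _ (LinearMap.mulLeft ℂ (MonoidAlgebra.single g (1 : ℂ))) =
      if g = 1 then (Fintype.card G : ℂ) else 0 := by
  let b : Module.Basis G ℂ (MonoidAlgebra ℂ G) := MonoidAlgebra.basis G ℂ
  rw [LinearMap.trace_eq_matrix_trace ℂ b, Matrix.trace]
  have : ∀ h, (LinearMap.toMatrix b b (LinearMap.mulLeft ℂ
      (MonoidAlgebra.single g (1 : ℂ)))).diag h = if g = 1 then 1 else 0 := by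
    intro h
    rw [Matrix.diag_apply, LinearMap.toMatrix_apply, LinearMap.mulLeft_apply,
      MonoidAlgebra.basis_apply, MonoidAlgebra.single_mul_single, mul_one,
      ← MonoidAlgebra.basis_apply, Module.Basis.repr_self, Finsupp.single_apply]
    simp
  rw [Finset.sum_congr rfl fun h _ => this h]
  simp

lemma key {G : Type} [Group G] [Fintype G] [IsSimpleGroup G] (g : G)
    (hg : ∃ h, h * g ≠ g * h) (C : Finset G) (hC : ∀ x, x ∈ C ↔ IsConj g x)
    (q k : ℕ) (hq : q.Prime) (hcard : C.card = q ^ k) : False := by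
  classical
  obtain ⟨m, d, hd, ⟨e⟩⟩ :=
    IsSemisimpleRing.exists_algEquiv_pi_matrix_of_isAlgClosed ℂ (MonoidAlgebra ℂ G)
  have hd0 : ∀ i, d i ≠ 0 := fun i => (hd i).out
  have hg1 : g ≠ 1 := by rintro rfl; obtain ⟨h, hh⟩ := hg; simp at hh
  have hcG : (Fintype.card G : ℂ) ≠ 0 := by exact_mod_cast Fintype.card_ne_zero
  -- the components
  let E : ∀ i, MonoidAlgebra ℂ G →ₐ[ℂ] Matrix (Fin (d i)) (Fin (d i)) ℂ := fun i =>
    (Pi.evalAlgHom ℂ (fun i => Matrix (Fin (d i)) (Fin (d i)) ℂ) i).comp e.toAlgHom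
  have hE : ∀ i x, E i x = e x i := fun i x => rfl
  have hsurj : ∀ i (M : Matrix (Fin (d i)) (Fin (d i)) ℂ), ∃ x, E i x = M := fun i M =>
    ⟨e.symm (Pi.single i M), by rw [hE, AlgEquiv.apply_symm_apply, Pi.single_eq_same]⟩
  let ρ : ∀ i, G →* Matrix (Fin (d i)) (Fin (d i)) ℂ := fun i =>
    (E i : MonoidAlgebra ℂ G →* _).comp (MonoidAlgebra.of ℂ G)
  have hρ : ∀ i h, ρ i h = E i (MonoidAlgebra.single h 1) := fun i h => rfl
  -- elements commuting with `ρ i` are scalars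
  have hscal : ∀ i (M : Matrix (Fin (d i)) (Fin (d i)) ℂ), (∀ h, ρ i h * M = M * ρ i h) →
      ∃ c : ℂ, M = algebraMap ℂ _ c := by
    intro i M hM
    have hall : ∀ x : MonoidAlgebra ℂ G, E i x * M = M * E i x := by
      intro x
      induction x using MonoidAlgebra.induction_on with
      | of h => exact hM h
      | add x y hx hy => rw [map_add, add_mul, mul_add, hx, hy]
      | smul r x hx => rw [map_smul, smul_mul_assoc, mul_smul_comm, hx]
    have : M ∈ Set.range (Matrix.scalar (Fin (d i))) := by
      rw [← Matrix.center_eq_range, Semigroup.mem_center_iff]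
      intro N
      obtain ⟨x, rfl⟩ := hsurj i N
      exact hall x
    obtain ⟨c, hc⟩ := this
    exact ⟨c, hc.symm⟩
  have hpow : ∀ i, ρ i g ^ Fintype.card G = 1 := fun i => by
    rw [← map_pow, pow_card_eq_one, map_one]
  have htint : ∀ i, IsIntegral ℤ (ρ i g).trace := fun i =>
    isIntegral_trace_of_pow Fintype.card_ne_zero _ (hpow i)
  -- the main step
  have hmain : ∀ i, ¬ q ∣ d i → (∃ h, ρ i h ≠ 1) → (ρ i g).trace = 0 := by
    intro i hqd ⟨h0, hh0⟩
    by_contra htr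
    have hdC : (d i : ℂ) ≠ 0 := by exact_mod_cast hd0 i
    -- the class sum
    let c : Matrix (Fin (d i)) (Fin (d i)) ℂ := ∑ x ∈ C, ρ i x
    have hcint : IsIntegral ℤ c := by
      let z : MonoidAlgebra ℤ G := ∑ x ∈ C, MonoidAlgebra.of ℤ G x
      have hz : IsIntegral ℤ z := Algebra.IsIntegral.isIntegral z
      have := hz.map (MonoidAlgebra.lift ℤ (Matrix (Fin (d i)) (Fin (d i)) ℂ) G (ρ i))
      have h2 : MonoidAlgebra.lift ℤ (Matrix (Fin (d i)) (Fin (d i)) ℂ) G (ρ i) z = c := by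
        rw [map_sum]
        exact Finset.sum_congr rfl fun x _ => MonoidAlgebra.lift_of _ _
      rwa [h2] at this
    obtain ⟨w, hw⟩ := hscal i c (by
      intro h
      rw [Finset.mul_sum, Finset.sum_mul]
      simp only [← map_mul]
      refine Finset.sum_bij' (fun x _ => h * x * h⁻¹) (fun x _ => h⁻¹ * x * h) ?_ ?_ ?_ ?_ ?_
      · intro x hx
        rw [hC] at hx ⊢
        exact hx.trans (isConj_iff.2 ⟨h, rfl⟩)
      · intro x hx
        rw [hC] at hx ⊢
        exact hx.trans (isConj_iff.2 ⟨h⁻¹, by simp⟩)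
      · intro x _; group
      · intro x _; group
      · intro x _; congr 1; group)
    have : Nonempty (Fin (d i)) := Fin.pos_iff_nonempty.1 (Nat.pos_of_ne_zero (hd0 i))
    have hwint : IsIntegral ℤ w := by
      rw [hw] at hcint
      exact (isIntegral_algHom_iff
        ((algebraMap ℂ (Matrix (Fin (d i)) (Fin (d i)) ℂ)).toIntAlgHom)
        (FaithfulSMul.algebraMap_injective _ _)).1 hcint
    have htrx : ∀ x ∈ C, (ρ i x).trace = (ρ i g).trace := by
      intro x hx
      obtain ⟨h, rfl⟩ := isConj_iff.1 ((hC x).1 hx)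
      rw [map_mul, Matrix.trace_mul_comm, ← map_mul]
      congr 2; group
    have hwtr : (q : ℂ) ^ k * (ρ i g).trace = d i * w := by
      have h1 : c.trace = (q : ℂ) ^ k * (ρ i g).trace := by
        rw [Matrix.trace_sum, Finset.sum_congr rfl htrx, Finset.sum_const, hcard]
        simp
      rw [← h1, hw, Matrix.algebraMap_eq_diagonal]
      simp [Matrix.trace_diagonal]
    have hcop : IsCoprime ((q : ℤ) ^ k) (d i : ℤ) := by
      apply IsCoprime.pow_left
      exact Nat.isCoprime_iff_coprime.2 ((Nat.Prime.coprime_iff_not_dvd hq).2 hqd)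
    obtain ⟨u, v, huv⟩ := hcop
    have huv' : (u : ℂ) * (q : ℂ) ^ k + v * (d i) = 1 := by exact_mod_cast huv
    have hint : IsIntegral ℤ ((ρ i g).trace / d i) := by
      have : (ρ i g).trace / d i = u * w + v * (ρ i g).trace := by
        rw [div_eq_iff hdC]
        linear_combination (-(ρ i g).trace) * huv' + u * hwtr
      rw [this]
      exact ((isIntegral_algebraMap (R := ℤ) (x := u)).mul hwint).add
        ((isIntegral_algebraMap (R := ℤ) (x := v)).mul (htint i))
    obtain ⟨c', hc'⟩ := scalar_of_integral Fintype.card_ne_zero (hd0 i) _ (hpow i) hint htr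
    rcases IsSimpleGroup.eq_bot_or_eq_top_of_normal (ρ i).ker inferInstance with hk | hk
    · obtain ⟨h, hh⟩ := hg
      apply hh
      apply (MonoidHom.ker_eq_bot_iff (ρ i)).1 hk
      rw [map_mul, map_mul, hc', Algebra.commutes]
    · exact hh0 ((MonoidHom.mem_ker).1 (hk ▸ Subgroup.mem_top h0))
  -- the averaging element
  let ε : MonoidAlgebra ℂ G := (Fintype.card G : ℂ)⁻¹ • ∑ h, MonoidAlgebra.single h 1
  have hεmul : ∀ h : G, MonoidAlgebra.single h 1 * ε = ε := by
    intro h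
    simp only [ε, mul_smul_comm, Finset.mul_sum, MonoidAlgebra.single_mul_single, mul_one]
    congr 1
    exact Fintype.sum_equiv (Equiv.mulLeft h) _ _ fun x => rfl
  have hεmul' : ∀ h : G, ε * MonoidAlgebra.single h 1 = ε := by
    intro h
    simp only [ε, smul_mul_assoc, Finset.sum_mul, MonoidAlgebra.single_mul_single, mul_one]
    congr 1
    exact Fintype.sum_equiv (Equiv.mulRight h) _ _ fun x => rfl
  have hεtriv : ∀ i, (∀ h, ρ i h = 1) → E i ε = 1 := by
    intro i hi
    simp only [ε, map_smul, map_sum, ← hρ, hi]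
    simp [← Nat.cast_smul_eq_nsmul ℂ, smul_smul, hcG]
  have hεnon : ∀ i, (∃ h, ρ i h ≠ 1) → E i ε = 0 := by
    rintro i ⟨h, hh⟩
    obtain ⟨c, hc⟩ := hscal i (E i ε) (fun h => by
      rw [hρ, ← map_mul, ← map_mul, hεmul, hεmul'])
    have h1 : ρ i h * E i ε = E i ε := by rw [hρ, ← map_mul, hεmul]
    rcases eq_or_ne c 0 with rfl | hc0
    · simpa using hc
    · exfalso
      apply hh
      rw [hc, ← Algebra.commutes, ← Algebra.smul_def] at h1
      have := congrArg (fun M => c⁻¹ • M) h1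
      simpa [Algebra.algebraMap_eq_smul_one, smul_smul, hc0] using this
  have htrε : LinearMap.trace ℂ _ (LinearMap.mulLeft ℂ ε) = 1 := by
    have : LinearMap.mulLeft ℂ ε = (Fintype.card G : ℂ)⁻¹ • ∑ h : G,
        LinearMap.mulLeft ℂ (MonoidAlgebra.single h (1 : ℂ)) := by
      apply LinearMap.ext
      intro x
      simp [ε, Finset.sum_mul, LinearMap.sum_apply]
    rw [this, map_smul, map_sum]
    simp only [trace_group]
    simp [hcG]
  have htre : ∀ x : MonoidAlgebra ℂ G, LinearMap.trace ℂ _ (LinearMap.mulLeft ℂ x) =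
      ∑ i, (d i : ℂ) * (E i x).trace := by
    intro x
    have h1 : LinearMap.mulLeft ℂ (e x) = e.toLinearEquiv.conj (LinearMap.mulLeft ℂ x) := by
      apply LinearMap.ext
      intro y
      simp [LinearEquiv.conj_apply]
    have h2 := trace_pi d (e x)
    rw [h1, LinearMap.trace_conj'] at h2
    exact h2
  have hfin : (-1 : ℂ) = ∑ i, (d i : ℂ) * ((ρ i g).trace - (E i ε).trace) := by
    simp only [mul_sub, Finset.sum_sub_distrib, ← htre, htrε, hρ, trace_group, if_neg hg1]
    simp
  have hq0 : (q : ℂ) ≠ 0 := by exact_mod_cast hq.ne_zero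
  have hint : IsIntegral ℤ ((-1 : ℂ) / q) := by
    rw [hfin, Finset.sum_div]
    refine IsIntegral.sum _ fun i _ => ?_
    by_cases hi : ∀ h, ρ i h = 1
    · rw [hεtriv i hi, hi g, sub_self, mul_zero, zero_div]
      exact isIntegral_zero
    · push Not at hi
      rw [hεnon i hi, Matrix.trace_zero, sub_zero]
      by_cases hqd : q ∣ d i
      · obtain ⟨r, hr⟩ := hqd
        have : (d i : ℂ) * (ρ i g).trace / q = r * (ρ i g).trace := by
          have : (d i : ℂ) = q * r := by exact_mod_cast hr
          rw [this]; field_simp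
        rw [this]
        have h5 : IsIntegral ℤ (r : ℂ) := by
          simpa using (isIntegral_algebraMap (R := ℤ) (A := ℂ) (x := (r : ℤ)))
        exact h5.mul (htint i)
      · rw [hmain i hqd hi, mul_zero, zero_div]
        exact isIntegral_zero
  have hrat : IsIntegral ℤ ((-1 : ℚ) / q) := by
    have h3 : (algebraMap ℚ ℂ) ((-1 : ℚ) / q) = (-1 : ℂ) / q := by simp
    rw [← h3] at hint
    exact (isIntegral_algebraMap_iff (algebraMap ℚ ℂ).injective).1 hint
  obtain ⟨y, hy⟩ := IsIntegrallyClosed.isIntegral_iff.1 hrat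
  have hq0' : (q : ℚ) ≠ 0 := by exact_mod_cast hq.ne_zero
  have hy2 : (y : ℚ) * q = -1 := by
    have : (y : ℚ) = -1 / q := by simpa using hy
    rw [this]; field_simp
  have hy3 : y * (q : ℤ) = -1 := by exact_mod_cast hy2
  have hdvd : (q : ℤ) ∣ 1 := ⟨-y, by linarith⟩
  have := Int.natCast_dvd_natCast.1 (by simpa using hdvd : (q : ℤ) ∣ ((1 : ℕ) : ℤ))
  exact hq.one_lt.ne' (Nat.dvd_one.1 this)

theorem stmt_aux (N : ℕ) : ∀ (G : Type) [Group G] [Fintype G]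
    (p q a b : ℕ) (_ : p.Prime) (_ : q.Prime) (_ : Fintype.card G ≤ N) (_ : Nontrivial G)
    (_ : Fintype.card G = p ^ a * q ^ b),
    ∃ φ : G →* ℂˣ, φ ≠ 1 := by
  classical
  induction N with
  | zero =>
    intro G _ _ p q a b _ _ h
    exact absurd h (by simpa using Fintype.card_ne_zero)
  | succ N ih =>
    intro G _ _ p q a b hp hq hN hnt hcard
    by_contra hno
    -- `G` is simple
    have hsimple : IsSimpleGroup G := by
      refine ⟨fun H hH => ?_⟩
      by_contra hcon
      push Not at hcon
      obtain ⟨hbot, htop⟩ := hcon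
      have hmul := Subgroup.card_eq_card_quotient_mul_card_subgroup H
      have hH1 : 1 < Nat.card H := Subgroup.one_lt_card_iff_ne_bot _ |>.2 hbot
      have hntq : Nontrivial (G ⧸ H) := QuotientGroup.nontrivial_iff.2 htop
      have hlt : Fintype.card (G ⧸ H) < Fintype.card G := by
        rw [← Nat.card_eq_fintype_card, ← Nat.card_eq_fintype_card, hmul]
        exact lt_mul_of_one_lt_right Nat.card_pos hH1
      have hdvd : Fintype.card (G ⧸ H) ∣ p ^ a * q ^ b := by
        rw [← hcard, ← Nat.card_eq_fintype_card, ← Nat.card_eq_fintype_card, hmul]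
        exact dvd_mul_right _ _
      obtain ⟨x, y, hx, hy, hxy⟩ := exists_dvd_and_dvd_of_dvd_mul hdvd
      obtain ⟨a', -, rfl⟩ := (Nat.dvd_prime_pow hp).1 hx
      obtain ⟨b', -, rfl⟩ := (Nat.dvd_prime_pow hq).1 hy
      obtain ⟨φ, hφ⟩ := ih (G ⧸ H) p q a' b' hp hq (by omega) hntq hxy
      apply hno
      refine ⟨φ.comp (QuotientGroup.mk' H), fun h => hφ ?_⟩
      apply MonoidHom.ext
      intro z
      obtain ⟨z, rfl⟩ := QuotientGroup.mk'_surjective H z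
      exact DFunLike.congr_fun h z
    -- `G` is not abelian
    have hcent : ∀ g : G, g ≠ 1 → ∃ h, h * g ≠ g * h := by
      intro g hg
      by_contra hcon
      push Not at hcon
      have hgc : g ∈ Subgroup.center G := Subgroup.mem_center_iff.2 hcon
      rcases IsSimpleGroup.eq_bot_or_eq_top_of_normal (Subgroup.center G) inferInstance
        with hk | hk
      · rw [hk, Subgroup.mem_bot] at hgc
        exact hg hgc
      · let _ : CommGroup G := { ‹Group G› with
          mul_comm := fun x y =>
            (Subgroup.mem_center_iff.1 (hk ▸ Subgroup.mem_top y : y ∈ Subgroup.center G) x) }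
        have : NeZero ((Monoid.exponent G : ℕ) : ℂ) :=
          ⟨by exact_mod_cast Monoid.exponent_ne_zero_of_finite⟩
        obtain ⟨φ, hφ⟩ := CommGroup.exists_apply_ne_one_of_hasEnoughRootsOfUnity G ℂ hg
        exact hno ⟨φ, fun h => hφ (by rw [h]; rfl)⟩
    -- WLOG form
    have hw : ∀ (p q a b : ℕ), p.Prime → q.Prime → Fintype.card G = p ^ a * q ^ b →
        p ∣ Fintype.card G → False := by
      intro p q a b hp hq hcard hpd
      have : Fact p.Prime := ⟨hp⟩
      let P : Sylow p G := default
      have hPnt : Nontrivial P := by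
        rw [← Finite.one_lt_card_iff_nontrivial, Sylow.card_eq_multiplicity]
        refine Nat.one_lt_pow ?_ hp.one_lt
        rw [Nat.card_eq_fintype_card]
        exact (hp.factorization_pos_of_dvd Fintype.card_ne_zero hpd).ne'
      have hcn := P.isPGroup'.center_nontrivial
      obtain ⟨⟨⟨g, hgP⟩, hgc⟩, hg1⟩ := exists_ne (1 : Subgroup.center P)
      have hg1' : g ≠ 1 := fun h => hg1 (by subst h; rfl)
      have hle : (P : Subgroup G) ≤ Subgroup.centralizer {g} := by
        intro x hx
        rw [Subgroup.mem_centralizer_singleton_iff]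
        exact congrArg Subtype.val (Subgroup.mem_center_iff.1 hgc ⟨x, hx⟩)
      let C : Finset G := Finset.univ.filter (IsConj g)
      have hCcard : C.card = (Subgroup.centralizer {g}).index := by
        have h1 : (C : Set G) = MulAction.orbit (ConjAct G) g := by
          ext x
          rw [ConjAct.mem_orbit_conjAct]
          simp only [C, Finset.coe_filter, Finset.mem_univ, true_and, Set.mem_ofPred_eq]
          exact isConj_comm
        have h2 := MulAction.index_stabilizer (ConjAct G) g
        rw [← h1, Set.ncard_coe_finset] at h2
        rw [← h2]
        have h3 := (Subgroup.centralizer {g}).card_mul_index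
        have h4 := (MulAction.stabilizer (ConjAct G) g).card_mul_index
        rw [← Subgroup.nat_card_centralizer_nat_card_stabilizer] at h4
        have h5 : Nat.card (ConjAct G) = Nat.card G := rfl
        rw [h5, ← h3] at h4
        exact Nat.eq_of_mul_eq_mul_left Nat.card_pos h4
      have hidx : (Subgroup.centralizer {g}).index ∣ (P : Subgroup G).index :=
        Subgroup.index_dvd_of_le hle
      have hndvd : ¬ p ∣ C.card := fun h =>
        P.not_dvd_index ((hCcard ▸ h).trans hidx)
      have hd2 : C.card ∣ p ^ a * q ^ b := by
        rw [hCcard, ← hcard, ← Nat.card_eq_fintype_card]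
        exact Subgroup.index_dvd_card _
      have hd3 : C.card ∣ q ^ b :=
        (Nat.Coprime.pow_right a ((Nat.Prime.coprime_iff_not_dvd hp).2 hndvd).symm).dvd_of_dvd_mul_left
          hd2
      obtain ⟨k, -, hk⟩ := (Nat.dvd_prime_pow hq).1 hd3
      exact key g (hcent g hg1') C (by simp [C]) q k hq hk
    have hone : Fintype.card G ≠ 1 := (Fintype.one_lt_card).ne'
    by_cases ha : a = 0
    · have hb : b ≠ 0 := by rintro rfl; apply hone; simp [hcard, ha]
      exact hw q p b a hq hp (by rw [hcard, mul_comm]) (by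
        rw [hcard]; exact (dvd_pow_self q hb).mul_left _)
    · exact hw p q a b hp hq hcard (by
        rw [hcard]; exact (dvd_pow_self p ha).mul_right _)

theorem stmt_18 (G : Type) [Group G] [Fintype G]
    (p q a b : ℕ) (hp : p.Prime) (hq : q.Prime) (hab : 0 < a + b)
    (hcard : Fintype.card G = p ^ a * q ^ b) :
    ∃ φ : G →* ℂˣ, φ ≠ 1 := by
  refine stmt_aux (Fintype.card G) G p q a b hp hq le_rfl ?_ hcard
  rw [← Fintype.one_lt_card_iff_nontrivial, hcard]
  rcases Nat.eq_zero_or_pos a with ha | ha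
  · have hb : b ≠ 0 := by omega
    simpa [ha] using Nat.one_lt_pow hb hq.one_lt
  · exact lt_of_lt_of_le (Nat.one_lt_pow ha.ne' hp.one_lt)
      (Nat.le_mul_of_pos_right _ (pow_pos hq.pos b))
end
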